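/- (Subadditivity, Palatini–Zak) Let X ⊂ P^r be a smooth, irreducible, non-degenerate variety of dimension n, and let k_0 be the least k with S^k(X) = P^r. Then ψ_1 ≤ ψ_2 ≤ ⋯ ≤ ψ_{k_0} ≤ n and ψ_k ≥ ψ_{k-1} + ψ_1 for all k ≤ k_0; consequently ψ_k ≥ k·ψ_1 for all k ≤ k_0. -/

import Mathlib

open MvPolynomial Classical

noncomputable section

/-- A subset of affine space is algebraic if it is the zero locus of a set of polynomials. -/
def IsAlg {N : ℕ} (S : Set (Fin N → ℂ)) : Prop :=
  ∃ I : Set (MvPolynomial (Fin N) ℂ), S = {x | ∀ f ∈ I, eval x f = 0}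

/-- Zariski closure. -/
def zcl {N : ℕ} (S : Set (Fin N → ℂ)) : Set (Fin N → ℂ) :=
  ⋂₀ {T | IsAlg T ∧ S ⊆ T}

/-- Affine cones (over projective sets). -/
def IsCone {N : ℕ} (S : Set (Fin N → ℂ)) : Prop :=
  (0 : Fin N → ℂ) ∈ S ∧ ∀ c : ℂ, ∀ x ∈ S, c • x ∈ S

/-- Irreducible algebraic subsets. -/
def IrrAlg {N : ℕ} (S : Set (Fin N → ℂ)) : Prop :=
  IsAlg S ∧ S.Nonempty ∧ ∀ T₁ T₂ : Set (Fin N → ℂ), IsAlg T₁ → IsAlg T₂ →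
    S ⊆ T₁ ∪ T₂ → (S ⊆ T₁ ∨ S ⊆ T₂)

/-- Non-degenerate: the cone spans the ambient space. -/
def Nondeg {N : ℕ} (S : Set (Fin N → ℂ)) : Prop :=
  Submodule.span ℂ S = ⊤

/-- Projective dimension of (the projectivization of) a cone `S`,
defined as the Krull dimension of the poset of irreducible algebraic
subcones of `S` different from `{0}`. -/
noncomputable def pdim {N : ℕ} (S : Set (Fin N → ℂ)) : WithBot ℕ∞ :=
  Order.krullDim {T : Set (Fin N → ℂ) // IrrAlg T ∧ IsCone T ∧ T ≠ {0} ∧ T ⊆ S}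

/-- Cast a natural number into `WithBot ℕ∞`. -/
def nn (a : ℕ) : WithBot ℕ∞ := ((a : ℕ∞) : WithBot ℕ∞)

/-- Join of two cones. -/
def joinSet {N : ℕ} (S T : Set (Fin N → ℂ)) : Set (Fin N → ℂ) :=
  zcl {x | ∃ u ∈ S, ∃ v ∈ T, x = u + v}

/-- `secant k S` is (the cone over) the `k`-secant variety `S^k(X) = J(X^{k+1})`. -/
def secant {N : ℕ} : ℕ → Set (Fin N → ℂ) → Set (Fin N → ℂ)
  | 0, S => zcl S
  | (k+1), S => joinSet (secant k S) S

/-- Join of a finite family of cones. -/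
def joinFam {N m : ℕ} (F : Fin m → Set (Fin N → ℂ)) : Set (Fin N → ℂ) :=
  zcl {x | ∃ q : Fin m → Fin N → ℂ, (∀ i, q i ∈ F i) ∧ x = ∑ i, q i}

/-- Irreducible components. -/
def IsComponent {N : ℕ} (S T : Set (Fin N → ℂ)) : Prop :=
  IrrAlg T ∧ T ⊆ S ∧ ∀ T', IrrAlg T' → T' ⊆ S → T ⊆ T' → T = T'

/-- Union of the irreducible components of `S` through `x`. -/
def compThrough {N : ℕ} (S : Set (Fin N → ℂ)) (x : Fin N → ℂ) : Set (Fin N → ℂ) :=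
  ⋃₀ {T | IsComponent S T ∧ x ∈ T}

/-- Pure (equidimensional) sets. -/
def IsPure {N : ℕ} (S : Set (Fin N → ℂ)) : Prop :=
  ∀ T T', IsComponent S T → IsComponent S T' → pdim T = pdim T'

/-- Secant variety in the convention for possibly reducible varieties:
union of the joins of `k+1` distinct irreducible components (and the usual
secant variety in the irreducible case). -/
def SecantD {N : ℕ} (k : ℕ) (Y : Set (Fin N → ℂ)) : Set (Fin N → ℂ) :=
  (⋃₀ {J | ∃ T : Fin (k+1) → Set (Fin N → ℂ),
      (∀ i, IsComponent Y (T i)) ∧ Function.Injective T ∧ J = joinFam T})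
  ∪ {x | IrrAlg Y ∧ x ∈ secant k Y}

/-- The (cone over the) embedded tangent space at `x`: directions annihilated by the
differentials at `x` of all polynomials vanishing on `S`. -/
def embTangent {N : ℕ} (S : Set (Fin N → ℂ)) (x : Fin N → ℂ) : Set (Fin N → ℂ) :=
  {v | ∀ f : MvPolynomial (Fin N) ℂ, (∀ y ∈ S, eval y f = 0) →
      ∑ i, v i * eval x (pderiv i f) = 0}

def tanSpan {N : ℕ} (S : Set (Fin N → ℂ)) (x : Fin N → ℂ) : Submodule ℂ (Fin N → ℂ) :=
  Submodule.span ℂ (embTangent S x)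

/-- `x` is a smooth point of the `n`-dimensional projective variety with cone `S`. -/
def IsSmoothAt {N : ℕ} (S : Set (Fin N → ℂ)) (n : ℕ) (x : Fin N → ℂ) : Prop :=
  Module.finrank ℂ (tanSpan S x) = n + 1

/-- Algebraic subsets of tuple spaces. -/
def IsAlgT {N m : ℕ} (S : Set (Fin m → Fin N → ℂ)) : Prop :=
  ∃ I : Set (MvPolynomial (Fin m × Fin N) ℂ),
    S = {q | ∀ f ∈ I, eval (fun p => q p.1 p.2) f = 0}

/-- `P` holds for general (tuples of) points of `X`. -/
def Generically {N : ℕ} (m : ℕ) (X : Set (Fin N → ℂ))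
    (P : (Fin m → Fin N → ℂ) → Prop) : Prop :=
  ∃ B : Set (Fin m → Fin N → ℂ), IsAlgT B ∧ ¬ ({q | ∀ i, q i ∈ X} ⊆ B) ∧
    ∀ q : Fin m → Fin N → ℂ, (∀ i, q i ∈ X ∧ q i ≠ 0) → q ∉ B → P q

/-- `P` holds for general points of the set `S`. -/
def GenericallyOn {N : ℕ} (S : Set (Fin N → ℂ)) (P : (Fin N → ℂ) → Prop) : Prop :=
  ∃ B : Set (Fin N → ℂ), IsAlg B ∧ ¬ (S ⊆ B) ∧ ∀ x ∈ S, x ∉ B → x ≠ 0 → P x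

/-- `L` is `J_k`-tangent to `X` along `Y`: for every analytic arc of a point of `X`
and `s ≤ k` points of `Y`, linearly independent off `0`, with the `X`-point off `L`
for `t ≠ 0` and on `L` at `t = 0`, the flat limit of the spanned `s`-space
(described through analytic selections of vectors) lies in `L`. -/
def JkTangent {N : ℕ} (k : ℕ) (X Y : Set (Fin N → ℂ))
    (L : Submodule ℂ (Fin N → ℂ)) : Prop :=
  ∀ s : ℕ, 1 ≤ s → s ≤ k → ∀ q : Fin (s+1) → ℂ → (Fin N → ℂ), ∀ ε : ℝ, 0 < ε →
    (∀ i, AnalyticOnNhd ℂ (q i) (Metric.ball 0 ε)) →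
    (∀ t ∈ Metric.ball (0:ℂ) ε, q 0 t ∈ X) →
    (∀ i : Fin (s+1), i ≠ 0 → ∀ t ∈ Metric.ball (0:ℂ) ε, q i t ∈ Y) →
    (∀ t ∈ Metric.ball (0:ℂ) ε, t ≠ 0 → LinearIndependent ℂ (fun i => q i t)) →
    (∀ t ∈ Metric.ball (0:ℂ) ε, t ≠ 0 → q 0 t ∉ L) →
    q 0 0 ∈ L →
    ∀ w : ℂ → (Fin N → ℂ), AnalyticOnNhd ℂ w (Metric.ball 0 ε) →
      (∀ t ∈ Metric.ball (0:ℂ) ε, t ≠ 0 →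
        w t ∈ Submodule.span ℂ (Set.range (fun i => q i t))) →
      w 0 ∈ L

/-- `X` is `k`-smooth along `Y`: it is smooth along `Y` and any arc-limit
scheme of `m ≤ k+1` points of `X` supported on `Y` spans the right dimension,
i.e. pairwise non-proportional arcs of points stay linearly independent. -/
def KSmoothAlong {N : ℕ} (k n : ℕ) (X Y : Set (Fin N → ℂ)) : Prop :=
  (∀ y ∈ Y, y ≠ 0 → IsSmoothAt X n y) ∧
  ∀ m : ℕ, 2 ≤ m → m ≤ k + 1 → ∀ q : Fin m → ℂ → (Fin N → ℂ), ∀ ε : ℝ, 0 < ε →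
    (∀ i, AnalyticOnNhd ℂ (q i) (Metric.ball 0 ε)) →
    (∀ i, ∀ t ∈ Metric.ball (0:ℂ) ε, q i t ∈ X) →
    (∀ i, q i 0 ∈ Y ∧ q i 0 ≠ 0) →
    (∀ t ∈ Metric.ball (0:ℂ) ε, t ≠ 0 → ∀ i j : Fin m, i ≠ j →
        ∀ c : ℂ, q i t ≠ c • q j t) →
    ∀ t ∈ Metric.ball (0:ℂ) ε, t ≠ 0 → LinearIndependent ℂ (fun i => q i t)

def KSmooth {N : ℕ} (k n : ℕ) (X : Set (Fin N → ℂ)) : Prop := KSmoothAlong k n X X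

/-- The hyperplane with coefficient vector `c`. -/
def hypSub {N : ℕ} (c : Fin N → ℂ) : Submodule ℂ (Fin N → ℂ) :=
  LinearMap.ker (Finset.univ.sum fun i => c i • (LinearMap.proj i : (Fin N → ℂ) →ₗ[ℂ] ℂ))

/-- The hyperplane with coefficients `c` is tangent to `X` at the points `p j`. -/
def TangentHypAt {N m : ℕ} (X : Set (Fin N → ℂ)) (p : Fin m → Fin N → ℂ)
    (c : Fin N → ℂ) : Prop :=
  c ≠ 0 ∧ ∀ j, embTangent X (p j) ⊆ ↑(hypSub c)

/-- The tangential contact locus `Γ_{p_0,…,p_m}`: union of the irreducible components,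
through the points `p j`, of the closure of the locus of smooth points whose tangent
space lies in the span of the tangent spaces at the `p j` (`= T_{S^m(X),x}` by Terracini). -/
def GammaLocus {N m : ℕ} (X : Set (Fin N → ℂ)) (n : ℕ)
    (p : Fin m → Fin N → ℂ) : Set (Fin N → ℂ) :=
  ⋃₀ {T | IsComponent (zcl {q | q ∈ X ∧ q ≠ 0 ∧ IsSmoothAt X n q ∧
      embTangent X q ⊆ ↑(Submodule.span ℂ (⋃ j, embTangent X (p j)))}) T ∧ ∃ j, p j ∈ T}

/-- The projection contact locus `Ψ_{p_0,…,p_j}`: the component through `p 0` of the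
fibre through `p 0` of the tangential projection from `T_{X,p_1,…,p_j}`. -/
def PsiLocus {N j : ℕ} (X : Set (Fin N → ℂ))
    (p : Fin (j+1) → Fin N → ℂ) : Set (Fin N → ℂ) :=
  compThrough (X ∩ ↑(Submodule.span ℂ
    ((⋃ i : Fin j, embTangent X (p i.succ)) ∪ {p 0}))) (p 0)

/-- `X` is an `R_k`-variety: for `1 ≤ i ≤ k` and general points `p_0,…,p_i`, the
general hyperplane tangent to `X` at these points is `J_i`-tangent to `X` along the
tangential `i`-contact locus. -/
def RkVariety {N : ℕ} (k n : ℕ) (X : Set (Fin N → ℂ)) : Prop :=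
  ∀ i : ℕ, 1 ≤ i → i ≤ k →
    Generically (i+1) X fun p =>
      ∃ B : Set (Fin N → ℂ), IsAlg B ∧ ¬ ({c | TangentHypAt X p c} ⊆ B) ∧
        ∀ c, TangentHypAt X p c → c ∉ B → JkTangent i X (GammaLocus X n p) (hypSub c)

/-- The entry locus of `x` with respect to the `k`-secant variety of `X`. -/
def EntryLocus {N : ℕ} (k : ℕ) (X : Set (Fin N → ℂ)) (x : Fin N → ℂ) :
    Set (Fin N → ℂ) :=
  zcl {z | z ∈ X ∧ z ≠ 0 ∧ ∃ x' ∈ secant (k-1) X, x' ∉ Submodule.span ℂ {z} ∧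
      x ∈ Submodule.span ℂ ({z, x'} : Set (Fin N → ℂ))}

/-- `k`-Severi varieties: irreducible, non-degenerate `R_k`-varieties of dimension `n`
with `dim S^k(X) < r` and `dim S^k(X) = (k+2)n/2 + k`. -/
def KSeveri {N : ℕ} (k n : ℕ) (X : Set (Fin N → ℂ)) : Prop :=
  IrrAlg X ∧ IsCone X ∧ X ≠ {0} ∧ Nondeg X ∧ pdim X = nn n ∧
  RkVariety k n X ∧
  pdim (secant k X) < pdim (Set.univ : Set (Fin N → ℂ)) ∧
  pdim (secant k X) + pdim (secant k X) = nn ((k+2)*n + 2*k)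


section HelperPart
open MvPolynomial Classical

lemma ht_mv (s : ℕ) : ∀ m : Ideal (MvPolynomial (Fin s) ℂ), m.IsMaximal → m.height = s := by
  induction s with
  | zero =>
    intro m hm
    have e := MvPolynomial.isEmptyRingEquiv ℂ (Fin 0)
    have : IsField (MvPolynomial (Fin 0) ℂ) := e.toMulEquiv.isField (Field.toIsField ℂ)
    have h : m = ⊥ := by
      by_contra h
      exact Ring.not_isField_of_ne_of_ne h hm.ne_top this
    rw [h, Ideal.height_bot]; simp
  | succ s ih =>
    intro m hm
    let e := (finSuccEquiv ℂ s).toRingEquiv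
    rw [← RingEquiv.height_map e m]
    have hm' : (m.map e).IsMaximal := Ideal.map_isMaximal_of_equiv e
    let p : Ideal (MvPolynomial (Fin s) ℂ) := (m.map e).comap Polynomial.C
    have hp : p.IsMaximal := Polynomial.isMaximal_comap_C_of_isJacobsonRing (m.map e)
    have : (m.map e).LiesOver p := ⟨rfl⟩
    rw [Polynomial.height_eq_height_add_one p (m.map e), ih p hp]
    push_cast; rfl

lemma ht_fg (A : Type) [CommRing A] [IsDomain A] [Algebra ℂ A] [Algebra.FiniteType ℂ A] :
    ∃ d : ℕ, ∀ m : Ideal A, m.IsMaximal → m.height = d := by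
  obtain ⟨s, g, hg, hi⟩ := exists_integral_inj_algHom_of_fg ℂ A
  refine ⟨s, fun m hm => ?_⟩
  let : Algebra (MvPolynomial (Fin s) ℂ) A := g.toRingHom.toAlgebra
  have : Algebra.IsIntegral (MvPolynomial (Fin s) ℂ) A := ⟨hi⟩
  have : FaithfulSMul (MvPolynomial (Fin s) ℂ) A :=
    (faithfulSMul_iff_algebraMap_injective _ _).2 hg
  have : IsNoetherianRing A := Algebra.FiniteType.isNoetherianRing ℂ A
  have hc : (m.comap (algebraMap (MvPolynomial (Fin s) ℂ) A)).IsMaximal :=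
    Ideal.isMaximal_comap_of_isIntegral_of_isMaximal m
  let p := m.comap (algebraMap (MvPolynomial (Fin s) ℂ) A)
  have : m.LiesOver p := ⟨rfl⟩
  have hp := ht_mv s p hc
  apply le_antisymm
  · have h1 := Ideal.height_le_ringKrullDim_of_ne_top hm.ne_top
    have h2 : ringKrullDim A ≤ ringKrullDim (MvPolynomial (Fin s) ℂ) := by
      refine Order.krullDim_le_of_strictMono
        (PrimeSpectrum.comap (algebraMap (MvPolynomial (Fin s) ℂ) A)) ?_
      intro P Q hPQ
      exact Ideal.comap_lt_comap_of_integral_mem_sdiff (I := P.asIdeal) (J := Q.asIdeal)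
        hPQ.le (Set.exists_of_ssubset hPQ).choose_spec (Algebra.IsIntegral.isIntegral _)
    have h3 := h1.trans h2
    rw [MvPolynomial.ringKrullDim_of_isNoetherianRing] at h3
    simp at h3
    exact_mod_cast h3
  · rw [Ideal.height_eq_height_add_of_liesOver_of_hasGoingDown p m, hp]
    exact le_self_add

abbrev vI {N : ℕ} (T : Set (Fin N → ℂ)) : Ideal (MvPolynomial (Fin N) ℂ) := vanishingIdeal ℂ T

lemma mem_vI {N : ℕ} {T : Set (Fin N → ℂ)} {f : MvPolynomial (Fin N) ℂ} :
    f ∈ vI T ↔ ∀ x ∈ T, eval x f = 0 := by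
  simp [vI, mem_vanishingIdeal_iff, coe_aeval_eq_eval]

lemma mem_zl {N : ℕ} {I : Ideal (MvPolynomial (Fin N) ℂ)} {x : Fin N → ℂ} :
    x ∈ zeroLocus ℂ I ↔ ∀ f ∈ I, eval x f = 0 := by
  simp [mem_zeroLocus_iff, coe_aeval_eq_eval]

lemma isAlg_zl {N : ℕ} (I : Ideal (MvPolynomial (Fin N) ℂ)) : IsAlg (zeroLocus ℂ I) :=
  ⟨I, by ext x; simp [mem_zl]⟩

lemma zl_vI {N : ℕ} {T : Set (Fin N → ℂ)} (h : IsAlg T) : zeroLocus ℂ (vI T) = T := by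
  obtain ⟨I, rfl⟩ := h
  apply Set.Subset.antisymm
  · intro x hx f hf
    exact mem_zl.1 hx f (mem_vI.2 fun y hy => hy f hf)
  · intro x hx
    exact mem_zl.2 fun f hf => mem_vI.1 hf x hx

lemma isAlg_single {N : ℕ} (f : MvPolynomial (Fin N) ℂ) : IsAlg {x | eval x f = 0} :=
  ⟨{f}, by ext; simp⟩

lemma vI_prime {N : ℕ} {T : Set (Fin N → ℂ)} (h : IrrAlg T) : (vI T).IsPrime := by
  obtain ⟨hA, ⟨x, hx⟩, hT⟩ := h
  refine ⟨?_, ?_⟩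
  · intro h
    have : (1 : MvPolynomial (Fin N) ℂ) ∈ vI T := by rw [h]; trivial
    simpa using mem_vI.1 this x hx
  · intro f g hfg
    have := hT _ _ (isAlg_single f) (isAlg_single g) (by
      intro y hy
      have := mem_vI.1 hfg y hy
      simpa using this)
    rcases this with h | h
    · exact Or.inl (mem_vI.2 h)
    · exact Or.inr (mem_vI.2 h)

lemma irr_zl {N : ℕ} (P : Ideal (MvPolynomial (Fin N) ℂ)) [hP : P.IsPrime] :
    IrrAlg (zeroLocus ℂ P) := by
  have hv : vI (zeroLocus ℂ P) = P := IsPrime.vanishingIdeal_zeroLocus P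
  refine ⟨isAlg_zl P, ?_, ?_⟩
  · by_contra h
    rw [Set.not_nonempty_iff_eq_empty] at h
    rw [h] at hv
    apply hP.ne_top
    rw [← hv]; exact vanishingIdeal_empty
  · intro T₁ T₂ h1 h2 hs
    by_contra hcon
    push Not at hcon
    obtain ⟨c1, c2⟩ := hcon
    rw [← zl_vI h1] at c1
    rw [← zl_vI h2] at c2
    obtain ⟨x, hx, hx1⟩ := Set.not_subset.1 c1
    obtain ⟨y, hy, hy1⟩ := Set.not_subset.1 c2
    rw [mem_zl] at hx1 hy1
    push Not at hx1 hy1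
    obtain ⟨f, hf, hfx⟩ := hx1
    obtain ⟨g, hg, hgy⟩ := hy1
    have hfg : f * g ∈ P := by
      rw [← hv, mem_vI]
      intro z hz
      rcases hs hz with h | h
      · simp [mem_vI.1 hf z h]
      · simp [mem_vI.1 hg z h]
    rcases hP.mem_or_mem hfg with h | h
    · exact hfx (mem_zl.1 hx f h)
    · exact hgy (mem_zl.1 hy g h)

/-- dimension of an irreducible algebraic set -/
def dimA {N : ℕ} (T : Set (Fin N → ℂ)) : ℕ :=
  if h : (vI T).IsPrime then (ht_fg (MvPolynomial (Fin N) ℂ ⧸ vI T)).choose else 0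

lemma dimA_spec {N : ℕ} {T : Set (Fin N → ℂ)} (h : IrrAlg T) :
    ∀ m : Ideal (MvPolynomial (Fin N) ℂ ⧸ vI T), m.IsMaximal → m.height = dimA T := by
  have hp := vI_prime h
  rw [dimA, dif_pos hp]
  exact (ht_fg (MvPolynomial (Fin N) ℂ ⧸ vI T)).choose_spec

lemma vI_lt {N : ℕ} {T' T : Set (Fin N → ℂ)} (h' : IsAlg T') (h : IsAlg T) (hlt : T' ⊂ T) :
    vI T < vI T' := by
  refine lt_of_le_of_ne (vanishingIdeal_anti_mono hlt.1) ?_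
  intro e
  apply hlt.ne
  rw [← zl_vI h', ← zl_vI h, e]

lemma exists_series_ht {A : Type} [CommRing A] [IsNoetherianRing A] (p : Ideal A) [hp : p.IsPrime] :
    ∃ l : LTSeries (PrimeSpectrum A), RelSeries.last l = ⟨p, hp⟩ ∧ l.length = p.height :=
  p.exists_ltSeries_length_eq_height

lemma dimA_lt {N : ℕ} {T' T : Set (Fin N → ℂ)} (h' : IrrAlg T') (h : IrrAlg T) (hlt : T' ⊂ T) :
    dimA T' < dimA T := by
  have hp := vI_prime h
  have hp' := vI_prime h'
  have hl := vI_lt h'.1 h.1 hlt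
  obtain ⟨m, hm⟩ := Ideal.exists_maximal (MvPolynomial (Fin N) ℂ ⧸ vI T')
  have e' := dimA_spec h' m hm
  let φ : (MvPolynomial (Fin N) ℂ ⧸ vI T) →+* (MvPolynomial (Fin N) ℂ ⧸ vI T') :=
    Ideal.Quotient.factor hl.le
  have hφ : Function.Surjective φ := Ideal.Quotient.factor_surjective hl.le
  have hm2 : (m.comap φ).IsMaximal := Ideal.comap_isMaximal_of_surjective φ hφ
  have e := dimA_spec h _ hm2
  obtain ⟨l, hl1, hl2⟩ := exists_series_ht m
  let l2 := l.map (PrimeSpectrum.comap φ) (RingHom.strictMono_comap_of_surjective hφ)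
  obtain ⟨f, hf, hf'⟩ := Set.exists_of_ssubset hl
  have hb : (⟨⊥, Ideal.isPrime_bot⟩ : PrimeSpectrum (MvPolynomial (Fin N) ℂ ⧸ vI T)) < l2.head := by
    refine lt_of_le_of_ne (show (⊥ : Ideal _) ≤ _ from bot_le) ?_
    intro hh
    have : (Ideal.Quotient.mk (vI T) f) ∈ l2.head.asIdeal := by
      simp only [l2, LTSeries.head_map]
      change φ (Ideal.Quotient.mk (vI T) f) ∈ l.head.asIdeal
      have : φ (Ideal.Quotient.mk (vI T) f) = 0 := by
        simp only [φ, Ideal.Quotient.factor_mk]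
        exact Ideal.Quotient.eq_zero_iff_mem.2 hf
      rw [this]; exact Ideal.zero_mem _
    rw [← hh] at this
    exact hf' (Ideal.Quotient.eq_zero_iff_mem.1 this)
  have key := Order.length_le_height (p := l2.cons ⟨⊥, Ideal.isPrime_bot⟩ hb)
    (x := ⟨m.comap φ, hm2.isPrime⟩) (by
      simp only [RelSeries.last_cons, l2, LTSeries.last_map, hl1]; exact le_refl _)
  rw [← PrimeSpectrum.height_eq_orderHeight, e] at key
  rw [e'] at hl2
  simp only [RelSeries.cons_length, l2, LTSeries.map_length] at key
  have h1 : l.length = dimA T' := by exact_mod_cast hl2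
  have h2 : l.length + 1 ≤ dimA T := by exact_mod_cast key
  omega

lemma dimA_mono {N : ℕ} {T' T : Set (Fin N → ℂ)} (h' : IrrAlg T') (h : IrrAlg T) (hs : T' ⊆ T) :
    dimA T' ≤ dimA T := by
  rcases hs.eq_or_ssubset with rfl | h2
  · exact le_rfl
  · exact (dimA_lt h' h h2).le

lemma dimA_series {N : ℕ} (l : LTSeries (PrimeSpectrum (MvPolynomial (Fin N) ℂ))) :
    l.length ≤ dimA (zeroLocus ℂ l.head.asIdeal) := by
  have key : ∀ i : ℕ, ∀ hi : i < l.length + 1,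
      dimA (zeroLocus ℂ (l ⟨i, hi⟩).asIdeal) + i ≤ dimA (zeroLocus ℂ l.head.asIdeal) := by
    intro i
    induction i with
    | zero => intro hi; exact le_refl _
    | succ i ih =>
      intro hi
      have hi' : i < l.length + 1 := by omega
      have h1 := ih hi'
      have hlt : l ⟨i, hi'⟩ < l ⟨i+1, hi⟩ := l.strictMono (by simp)
      have hp1 := (l ⟨i, hi'⟩).2
      have hp2 := (l ⟨i+1, hi⟩).2
      have h2 : zeroLocus ℂ (l ⟨i+1, hi⟩).asIdeal ⊂ zeroLocus ℂ (l ⟨i, hi'⟩).asIdeal := by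
        refine lt_of_le_of_ne (zeroLocus_anti_mono hlt.le) ?_
        intro e
        apply hlt.ne
        ext1
        rw [← IsPrime.vanishingIdeal_zeroLocus (K := ℂ) (l ⟨i, hi'⟩).asIdeal,
          ← IsPrime.vanishingIdeal_zeroLocus (K := ℂ) (l ⟨i+1, hi⟩).asIdeal, e]
      have := dimA_lt (irr_zl _) (irr_zl _) h2
      omega
  have := key l.length (by omega)
  omega

lemma irr_singleton {N : ℕ} (x : Fin N → ℂ) : (vI {x}).IsMaximal := by
  exact isMaximal_iff_eq_vanishingIdeal_singleton.2 ⟨x, rfl⟩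

lemma krull_cut {N : ℕ} {T : Set (Fin N → ℂ)} (h : IrrAlg T) (x : Fin N → ℂ) (hx : x ∈ T)
    (s : Finset (MvPolynomial (Fin N) ℂ)) (hs : ∀ f ∈ s, eval x f = 0) :
    ∃ T', IrrAlg T' ∧ T' ⊆ T ∧ (∀ f ∈ s, ∀ y ∈ T', eval y f = 0) ∧ x ∈ T' ∧
      dimA T ≤ dimA T' + s.card := by
  have hp := vI_prime h
  have hmx := irr_singleton x
  have hle : vI T ≤ vI {x} := vanishingIdeal_anti_mono (by simpa using hx)
  let π := Ideal.Quotient.mk (vI T)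
  have hπ : Function.Surjective π := Ideal.Quotient.mk_surjective
  have hm : ((vI {x}).map π).IsMaximal := by
    refine Ideal.IsMaximal.map_of_surjective_of_ker_le hπ ?_
    rw [Ideal.mk_ker]; exact hle
  have e := dimA_spec h _ hm
  let s' : Set (MvPolynomial (Fin N) ℂ ⧸ vI T) := π '' s
  have hs' : s' ⊆ ((vI {x}).map π : Ideal _) := by
    rintro _ ⟨f, hf, rfl⟩
    exact Ideal.mem_map_of_mem _ (mem_vI.2 (by simpa using hs f hf))
  have hK := Ideal.height_le_height_add_encard_of_subset s' hs'
  let π' := Ideal.Quotient.mk (Ideal.span s')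
  have hπ' : Function.Surjective π' := Ideal.Quotient.mk_surjective
  have hm' : (((vI {x}).map π).map π').IsMaximal := by
    refine Ideal.IsMaximal.map_of_surjective_of_ker_le hπ' ?_
    rw [Ideal.mk_ker]; exact Ideal.span_le.2 hs'
  obtain ⟨l, hl1, hl2⟩ := exists_series_ht (((vI {x}).map π).map π')
  have hsur : Function.Surjective (π'.comp π) := hπ'.comp hπ
  let l2 := l.map (PrimeSpectrum.comap (π'.comp π)) (RingHom.strictMono_comap_of_surjective hsur)
  have hlen := dimA_series l2
  have hpr := l2.head.2
  refine ⟨zeroLocus ℂ l2.head.asIdeal, irr_zl _, ?_, ?_, ?_, ?_⟩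
  · intro y hy
    rw [← zl_vI h.1, mem_zl]
    intro f hf
    refine mem_zl.1 hy f ?_
    simp only [l2, LTSeries.head_map]
    change π' (π f) ∈ l.head.asIdeal
    rw [show π f = 0 from Ideal.Quotient.eq_zero_iff_mem.2 hf, map_zero]
    exact Ideal.zero_mem _
  · intro f hf y hy
    refine mem_zl.1 hy f ?_
    simp only [l2, LTSeries.head_map]
    change π' (π f) ∈ l.head.asIdeal
    rw [show π' (π f) = 0 from Ideal.Quotient.eq_zero_iff_mem.2 (Ideal.subset_span ⟨f, hf, rfl⟩)]
    exact Ideal.zero_mem _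
  · rw [mem_zl]
    intro f hf
    have h1 : l2.head ≤ l2.last := LTSeries.head_le_last l2
    have h2 := h1 hf
    simp only [l2, LTSeries.last_map, hl1] at h2
    change f ∈ (((vI {x}).map π).map π').comap (π'.comp π) at h2
    rw [Ideal.map_map, Ideal.comap_map_of_surjective _ hsur] at h2
    have h3 : Ideal.comap (π'.comp π) ⊥ ≤ vI {x} := by
      intro g hg
      have hg' : π' (π g) = 0 := hg
      have : π g ∈ Ideal.span s' := Ideal.Quotient.eq_zero_iff_mem.1 hg'
      have := (Ideal.span_le.2 hs') this
      rw [Ideal.mem_map_iff_of_surjective _ hπ] at this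
      obtain ⟨g', hg', e⟩ := this
      have := hle (Ideal.Quotient.eq.1 e)
      have h4 := Ideal.sub_mem _ hg' this
      simpa using h4
    rw [sup_eq_left.2 h3] at h2
    exact mem_vI.1 h2 x rfl
  · have h1 : l2.length = l.length := rfl
    have h2 : s'.encard ≤ s.card := by
      refine (Set.encard_image_le _ _).trans ?_
      simp
    rw [e, ← hl2] at hK
    have h3 := hK.trans (add_le_add_right h2 _)
    have h4 : dimA T ≤ l.length + s.card := by exact_mod_cast h3
    omega


/-- dilation -/
def dil {N : ℕ} (c : ℂ) (f : MvPolynomial (Fin N) ℂ) : MvPolynomial (Fin N) ℂ :=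
  aeval (fun i => C c * X i) f

lemma eval_dil {N : ℕ} (c : ℂ) (f : MvPolynomial (Fin N) ℂ) (y : Fin N → ℂ) :
    eval y (dil c f) = eval (c • y) f := by
  have : (eval y).comp (aeval (fun i => C c * X i) : _ →ₐ[ℂ] MvPolynomial (Fin N) ℂ).toRingHom
      = eval (c • y) := by
    apply MvPolynomial.ringHom_ext
    · intro a; simp
    · intro i; simp
  exact congrArg (fun φ => φ f) this

/-- restriction to a line -/
def lin1 {N : ℕ} (y z : Fin N → ℂ) (f : MvPolynomial (Fin N) ℂ) : Polynomial ℂ :=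
  aeval (fun i => Polynomial.C (y i) * Polynomial.X + Polynomial.C (z i)) f

lemma eval_lin1 {N : ℕ} (c : ℂ) (f : MvPolynomial (Fin N) ℂ) (y z : Fin N → ℂ) :
    Polynomial.eval c (lin1 y z f) = eval (c • y + z) f := by
  have : (Polynomial.evalRingHom c).comp
      (aeval (fun i => Polynomial.C (y i) * Polynomial.X + Polynomial.C (z i)) :
        _ →ₐ[ℂ] Polynomial ℂ).toRingHom
      = eval (c • y + z) := by
    apply MvPolynomial.ringHom_ext
    · intro a; simp
    · intro i; simp; ring
  exact congrArg (fun φ => φ f) this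

lemma poly_two {f g : Polynomial ℂ} (a b : ℂ) (hf : f.eval a ≠ 0) (hg : g.eval b ≠ 0) :
    ∃ c, f.eval c ≠ 0 ∧ g.eval c ≠ 0 := by
  have hf0 : f ≠ 0 := by rintro rfl; simp at hf
  have hg0 : g ≠ 0 := by rintro rfl; simp at hg
  by_contra h
  push Not at h
  have : f * g = 0 := by
    apply Polynomial.funext
    intro c
    by_cases hc : f.eval c = 0
    · simp [hc]
    · simp [h c hc]
  exact (mul_ne_zero hf0 hg0) this

lemma zcl_eq {N : ℕ} (S : Set (Fin N → ℂ)) : zcl S = zeroLocus ℂ (vI S) := by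
  apply Set.Subset.antisymm
  · exact Set.sInter_subset_of_mem ⟨isAlg_zl _, fun x hx => mem_zl.2 fun f hf => mem_vI.1 hf x hx⟩
  · rintro x hx T ⟨hT, hST⟩
    rw [← zl_vI hT]
    exact mem_zl.2 fun f hf => mem_zl.1 hx f (vanishingIdeal_anti_mono hST hf)

lemma irr_two {N : ℕ} {T : Set (Fin N → ℂ)} (h : IrrAlg T) {f g : MvPolynomial (Fin N) ℂ}
    {a b : Fin N → ℂ} (ha : a ∈ T) (hb : b ∈ T) (hf : eval a f ≠ 0) (hg : eval b g ≠ 0) :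
    ∃ c ∈ T, eval c f ≠ 0 ∧ eval c g ≠ 0 := by
  by_contra hc
  push Not at hc
  have hfg : f * g ∈ vI T := mem_vI.2 fun c hcT => by
    by_cases h1 : eval c f = 0
    · simp [h1]
    · simp [hc c hcT h1]
  rcases (vI_prime h).mem_or_mem hfg with h1 | h1
  · exact hf (mem_vI.1 h1 a ha)
  · exact hg (mem_vI.1 h1 b hb)

lemma cone_closure {N : ℕ} {T : Set (Fin N → ℂ)} (h : IrrAlg T) :
    ∃ T', IrrAlg T' ∧ IsCone T' ∧ T ⊆ T' ∧
      ∀ Z : Set (Fin N → ℂ), IsAlg Z → IsCone Z → T ⊆ Z → T' ⊆ Z := by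
  let S : Set (Fin N → ℂ) := {z | ∃ c : ℂ, ∃ y ∈ T, z = c • y}
  have hSp : (vI S).IsPrime := by
    obtain ⟨x, hx⟩ := h.2.1
    refine ⟨?_, ?_⟩
    · intro h1
      have : (1 : MvPolynomial (Fin N) ℂ) ∈ vI S := by rw [h1]; trivial
      simpa using mem_vI.1 this x ⟨1, x, hx, by simp⟩
    · intro f g hfg
      by_contra hcon
      push Not at hcon
      obtain ⟨h1, h2⟩ := hcon
      rw [mem_vI] at h1 h2
      push Not at h1 h2
      obtain ⟨_, ⟨c1, y1, hy1, rfl⟩, h1⟩ := h1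
      obtain ⟨_, ⟨c2, y2, hy2, rfl⟩, h2⟩ := h2
      rw [← eval_dil] at h1 h2
      obtain ⟨y, hy, h3, h4⟩ := irr_two h hy1 hy2 h1 h2
      rw [eval_dil] at h3 h4
      have e1 := eval_lin1 c1 f y 0
      have e2 := eval_lin1 c2 g y 0
      rw [add_zero] at e1 e2
      rw [← e1] at h3
      rw [← e2] at h4
      obtain ⟨c, h5, h6⟩ := poly_two _ _ h3 h4
      rw [eval_lin1, add_zero] at h5 h6
      have := mem_vI.1 hfg (c • y) ⟨c, y, hy, rfl⟩
      rw [map_mul] at this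
      exact (mul_ne_zero h5 h6) this
  have hSs : S ⊆ zeroLocus ℂ (vI S) := fun x hx => mem_zl.2 fun f hf => mem_vI.1 hf x hx
  refine ⟨zeroLocus ℂ (vI S), irr_zl _, ⟨?_, ?_⟩, ?_, ?_⟩
  · obtain ⟨x, hx⟩ := h.2.1
    exact hSs ⟨0, x, hx, by simp⟩
  · intro c x hx
    rw [mem_zl] at hx ⊢
    intro f hf
    rw [← eval_dil]
    apply hx
    rw [mem_vI]
    rintro _ ⟨d, y, hy, rfl⟩
    rw [eval_dil]
    exact mem_vI.1 hf _ ⟨c * d, y, hy, by rw [smul_smul]⟩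
  · intro x hx
    exact hSs ⟨1, x, hx, by simp⟩
  · intro Z hZ hZc hTZ x hx
    rw [← zl_vI hZ, mem_zl]
    intro f hf
    refine mem_zl.1 hx f ?_
    rw [mem_vI]
    rintro _ ⟨d, y, hy, rfl⟩
    exact mem_vI.1 hf _ (hZc.2 d y (hTZ hy))

lemma isAlg_inter {N : ℕ} {S T : Set (Fin N → ℂ)} (hS : IsAlg S) (hT : IsAlg T) :
    IsAlg (S ∩ T) := by
  obtain ⟨I, rfl⟩ := hS
  obtain ⟨J, rfl⟩ := hT
  refine ⟨I ∪ J, ?_⟩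
  ext x
  constructor
  · rintro ⟨h1, h2⟩ f (hf | hf)
    · exact h1 f hf
    · exact h2 f hf
  · intro h
    exact ⟨fun f hf => h f (Or.inl hf), fun f hf => h f (Or.inr hf)⟩

lemma cone_cut {N : ℕ} {T : Set (Fin N → ℂ)} (h : IrrAlg T) (hc : IsCone T)
    (x : Fin N → ℂ) (hx : x ∈ T)
    (s : Finset (MvPolynomial (Fin N) ℂ)) (hs : ∀ f ∈ s, eval x f = 0)
    (hs2 : IsCone {y | ∀ f ∈ s, eval y f = 0}) :
    ∃ T', IrrAlg T' ∧ IsCone T' ∧ T' ⊆ T ∧ (∀ f ∈ s, ∀ y ∈ T', eval y f = 0) ∧ x ∈ T' ∧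
      dimA T ≤ dimA T' + s.card := by
  obtain ⟨T1, h1, h2, h3, h4, h5⟩ := krull_cut h x hx s hs
  obtain ⟨T2, g1, g2, g3, g4⟩ := cone_closure h1
  refine ⟨T2, g1, g2, g4 T h.1 hc h2, ?_, g3 h4, ?_⟩
  · have := g4 {y | ∀ f ∈ s, eval y f = 0} ⟨s, by ext; simp⟩ hs2 (fun y hy f hf => h3 f hf y hy)
    intro f hf y hy
    exact this hy f hf
  · have := dimA_mono h1 g1 g3
    omega

lemma irr_pt {N : ℕ} (x : Fin N → ℂ) : IrrAlg ({x} : Set (Fin N → ℂ)) := by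
  have hA : IsAlg ({x} : Set (Fin N → ℂ)) := by
    refine ⟨Set.range (fun i => X i - C (x i)), ?_⟩
    ext y
    simp only [Set.mem_singleton_iff, Set.mem_ofPred_eq, Set.forall_mem_range]
    constructor
    · rintro rfl; simp
    · intro h; ext i; have := h i; simp at this; exact sub_eq_zero.1 this
  rw [← zl_vI hA]
  have := (irr_singleton x).isPrime
  exact irr_zl _

lemma dimA_pt {N : ℕ} (x : Fin N → ℂ) : dimA ({x} : Set (Fin N → ℂ)) = 0 := by
  have hm := irr_singleton x
  have h := dimA_spec (irr_pt x) ⊥ (Ideal.bot_quotient_isMaximal_iff _ |>.2 hm)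
  rw [Ideal.height_bot] at h
  exact_mod_cast h.symm

lemma dimA_pos {N : ℕ} {T : Set (Fin N → ℂ)} (h : IrrAlg T) (hc : IsCone T) (h0 : T ≠ {0}) :
    1 ≤ dimA T := by
  have : ({0} : Set (Fin N → ℂ)) ⊂ T := by
    refine Set.ssubset_iff_subset_ne.2 ⟨by simpa using hc.1, h0.symm⟩
  have := dimA_lt (irr_pt 0) h this
  omega

lemma pdim_le {N : ℕ} (S : Set (Fin N → ℂ)) (d : ℕ)
    (h : ∀ T, IrrAlg T → IsCone T → T ≠ {0} → T ⊆ S → dimA T ≤ d + 1) : pdim S ≤ nn d := by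
  refine iSup_le fun l => ?_
  let φ : {T : Set (Fin N → ℂ) // IrrAlg T ∧ IsCone T ∧ T ≠ {0} ∧ T ⊆ S} → ℕ :=
    fun T => dimA T.1 - 1
  have hφ : StrictMono φ := by
    intro T T' hTT
    have h1 := dimA_lt T.2.1 T'.2.1 hTT
    have h2 := dimA_pos T.2.1 T.2.2.1 T.2.2.2.1
    simp only [φ]; omega
  have h1 := LTSeries.head_add_length_le_nat (l.map φ hφ)
  have h2 : (l.map φ hφ).last ≤ d := by
    rw [LTSeries.last_map]
    have := h l.last.1 l.last.2.1 l.last.2.2.1 l.last.2.2.2.1 l.last.2.2.2.2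
    simp only [φ]; omega
  have h3 : l.length ≤ d := by
    have : (l.map φ hφ).length = l.length := rfl
    omega
  unfold nn
  exact_mod_cast h3

lemma pdim_ge {N : ℕ} (S : Set (Fin N → ℂ)) (d : ℕ) (T : Set (Fin N → ℂ))
    (h1 : IrrAlg T) (h2 : IsCone T) (h4 : T ⊆ S) (h5 : d + 1 ≤ dimA T) :
    nn d ≤ pdim S := by
  have key : ∀ d : ℕ, ∀ T, ∀ (h : IrrAlg T ∧ IsCone T ∧ T ≠ {0} ∧ T ⊆ S), d + 1 ≤ dimA T →
      ∃ l : LTSeries {T : Set (Fin N → ℂ) // IrrAlg T ∧ IsCone T ∧ T ≠ {0} ∧ T ⊆ S},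
        l.length = d ∧ l.last = ⟨T, h⟩ := by
    intro d
    induction d with
    | zero => intro T h _; exact ⟨RelSeries.singleton _ ⟨T, h⟩, rfl, rfl⟩
    | succ d ih =>
      intro T h hd
      obtain ⟨h1, h2, h3, h4⟩ := h
      have : ∃ x ∈ T, x ≠ 0 := by
        by_contra hcon
        push Not at hcon
        exact h3 (Set.Subset.antisymm hcon (by simpa using h2.1))
      obtain ⟨x, hx, hx0⟩ := this
      obtain ⟨a, ha⟩ := Function.ne_iff.1 hx0
      obtain ⟨T', g1, g2, g3, g4, g5, g6⟩ := cone_cut h1 h2 0 h2.1 {X a} (by simp)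
        ⟨by simp, by intro c y; simp only [Finset.mem_singleton, forall_eq, Set.mem_ofPred_eq, eval_X]
                     intro h; simp [h]⟩
      simp only [Finset.card_singleton] at g6
      have g7 : T' ≠ {0} := by
        rintro rfl
        rw [dimA_pt] at g6; omega
      have g8 : T' ⊂ T := by
        refine Set.ssubset_iff_subset_ne.2 ⟨g3, ?_⟩
        rintro rfl
        have := g4 (X a) (by simp) x hx
        simp at this
        exact ha this
      obtain ⟨l, hl1, hl2⟩ := ih T' ⟨g1, g2, g7, g3.trans h4⟩ (by omega)
      refine ⟨l.snoc ⟨T, h1, h2, h3, h4⟩ (by rw [hl2]; exact g8), ?_, ?_⟩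
      · simp [hl1]
      · simp
  have h3 : T ≠ {0} := by rintro rfl; rw [dimA_pt] at h5; omega
  obtain ⟨l, hl1, -⟩ := key d T ⟨h1, h2, h3, h4⟩ h5
  have := Order.LTSeries.length_le_krullDim l
  unfold nn pdim
  rw [← hl1]
  exact_mod_cast this

lemma exists_comp {N : ℕ} {S T : Set (Fin N → ℂ)} (hS : IsAlg S) (hT : IrrAlg T) (hTS : T ⊆ S) :
    ∃ p ∈ (vI S).minimalPrimes, IsComponent S (zeroLocus ℂ p) ∧ T ⊆ zeroLocus ℂ p := by
  have hp := vI_prime hT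
  obtain ⟨p, hp1, hp2⟩ := Ideal.exists_minimalPrimes_le (vanishingIdeal_anti_mono hTS : vI S ≤ vI T)
  have hpp : p.IsPrime := hp1.1.1
  refine ⟨p, hp1, ⟨irr_zl p, ?_, ?_⟩, ?_⟩
  · have := zeroLocus_anti_mono (K := ℂ) hp1.1.2
    rwa [zl_vI hS] at this
  · intro T' h1 h2 h3
    have hp' := vI_prime h1
    have h4 : vI T' ≤ p := by
      have := vanishingIdeal_anti_mono (k := ℂ) h3
      rwa [IsPrime.vanishingIdeal_zeroLocus] at this
    have h5 := hp1.2 ⟨hp', vanishingIdeal_anti_mono h2⟩ h4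
    rw [le_antisymm h5 h4, zl_vI h1.1]
  · nth_rw 1 [← zl_vI hT.1]
    exact zeroLocus_anti_mono hp2

lemma irr_sub_compThrough {N : ℕ} {S T : Set (Fin N → ℂ)} {x : Fin N → ℂ} (hS : IsAlg S)
    (hT : IrrAlg T) (hTS : T ⊆ compThrough S x) : ∃ T', IsComponent S T' ∧ x ∈ T' ∧ T ⊆ T' := by
  have hfin : (vI S).minimalPrimes.Finite := Ideal.finite_minimalPrimes_of_isNoetherianRing _ _
  have hcomp : ∀ T', IsComponent S T' → ∃ p ∈ (vI S).minimalPrimes, T' = zeroLocus ℂ p := by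
    intro T' h
    obtain ⟨p, hp, h1, h2⟩ := exists_comp hS h.1 h.2.1
    exact ⟨p, hp, h.2.2 _ h1.1 h1.2.1 h2⟩
  let F : Finset (Ideal (MvPolynomial (Fin N) ℂ)) := hfin.toFinset.filter
    (fun p => IsComponent S (zeroLocus ℂ p) ∧ x ∈ zeroLocus ℂ p)
  have hle : F.inf id ≤ vI T := by
    intro f hf
    rw [mem_vI]
    intro y hy
    obtain ⟨T', ⟨h1, h2⟩, h3⟩ := hTS hy
    obtain ⟨p, hp, rfl⟩ := hcomp T' h1
    have : F.inf id ≤ p := Finset.inf_le (f := id) (by simp [F, hp, h1]; simpa using h2)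
    exact mem_zl.1 h3 f (this hf)
  have hp := vI_prime hT
  obtain ⟨p, hp1, hp2⟩ := (Ideal.IsPrime.inf_le' hp).1 hle
  simp only [F, Finset.mem_filter] at hp1
  refine ⟨_, hp1.2.1, hp1.2.2, ?_⟩
  nth_rw 1 [← zl_vI hT.1]
  exact zeroLocus_anti_mono hp2

lemma sub_compThrough {N : ℕ} {S T : Set (Fin N → ℂ)} {x : Fin N → ℂ} (hS : IsAlg S)
    (hT : IrrAlg T) (hTS : T ⊆ S) (hx : x ∈ T) : T ⊆ compThrough S x := by
  obtain ⟨p, hp, h1, h2⟩ := exists_comp hS hT hTS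
  exact h2.trans (Set.subset_sUnion_of_mem ⟨h1, h2 hx⟩)


/-- differential at `x` -/
def dL {N : ℕ} (x : Fin N → ℂ) : MvPolynomial (Fin N) ℂ →ₗ[ℂ] Module.Dual ℂ (Fin N → ℂ) :=
  ∑ i, ((LinearMap.toSpanSingleton ℂ (Module.Dual ℂ (Fin N → ℂ)) (LinearMap.proj i)).comp
    ((MvPolynomial.aeval x : _ →ₐ[ℂ] ℂ).toLinearMap.comp (pderiv i).toLinearMap))

lemma dL_apply {N : ℕ} (x v : Fin N → ℂ) (f : MvPolynomial (Fin N) ℂ) :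
    dL x f v = ∑ i, v i * eval x (pderiv i f) := by
  simp [dL, LinearMap.sum_apply, mul_comm]

lemma dL_mul {N : ℕ} (x : Fin N → ℂ) (f g : MvPolynomial (Fin N) ℂ) :
    dL x (f * g) = eval x f • dL x g + eval x g • dL x f := by
  ext i
  simp [dL_apply, Derivation.leibniz, Pi.single_apply]

lemma mem_tan {N : ℕ} {S : Set (Fin N → ℂ)} {x v : Fin N → ℂ} :
    v ∈ tanSpan S x ↔ ∀ f ∈ vI S, dL x f v = 0 := by
  have : (Submodule.map (dL x) ((vI S).restrictScalars ℂ)).dualCoannihilator = tanSpan S x := by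
    have he : embTangent S x =
        ((Submodule.map (dL x) ((vI S).restrictScalars ℂ)).dualCoannihilator : Set _) := by
      ext v
      simp only [SetLike.mem_coe, Submodule.mem_dualCoannihilator, Submodule.mem_map,
        Submodule.restrictScalars_mem, forall_exists_index, and_imp, forall_apply_eq_imp_iff₂,
        embTangent, dL_apply, Set.mem_ofPred_eq, mem_vI]
    rw [tanSpan, he, Submodule.span_eq]
  rw [← this]
  simp [Submodule.mem_dualCoannihilator]

lemma mem_embTangent {N : ℕ} {S : Set (Fin N → ℂ)} {x v : Fin N → ℂ} :
    v ∈ embTangent S x ↔ v ∈ tanSpan S x := by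
  rw [mem_tan]
  simp only [embTangent, dL_apply, Set.mem_ofPred_eq, mem_vI]

lemma tan_eq {N : ℕ} (S : Set (Fin N → ℂ)) (x : Fin N → ℂ) :
    tanSpan S x = (Submodule.map (dL x) ((vI S).restrictScalars ℂ)).dualCoannihilator := by
  ext v
  rw [mem_tan]
  simp [Submodule.mem_dualCoannihilator]

lemma tan_finrank {N : ℕ} (S : Set (Fin N → ℂ)) (x : Fin N → ℂ) :
    Module.finrank ℂ (Submodule.map (dL x) ((vI S).restrictScalars ℂ)) +
      Module.finrank ℂ (tanSpan S x) = N := by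
  rw [tan_eq, Subspace.finrank_add_finrank_dualCoannihilator_eq]
  simp

lemma taylor2 {N : ℕ} (x : Fin N → ℂ) (g : MvPolynomial (Fin N) ℂ) :
    g - C (eval x g) - ∑ a, C (eval x (pderiv a g)) * (X a - C (x a)) ∈ (vI {x})^2 := by
  have hX : ∀ a, (X a - C (x a) : MvPolynomial (Fin N) ℂ) ∈ vI {x} := by
    intro a; rw [mem_vI]; simp
  induction g using MvPolynomial.induction_on with
  | C c => simp
  | add p q hp hq =>
    have := Ideal.add_mem _ hp hq
    convert this using 1
    simp only [map_add, add_mul, Finset.sum_add_distrib]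
    ring
  | mul_X p b hp =>
    have h1 := Ideal.mul_mem_right (X b) _ hp
    have h2 : ∑ a, C (eval x (pderiv a p)) * ((X a - C (x a)) * (X b - C (x b))) ∈ (vI {x})^2 := by
      refine Ideal.sum_mem _ fun a _ => Ideal.mul_mem_left _ _ ?_
      rw [pow_two]
      exact Ideal.mul_mem_mul (hX a) (hX b)
    have := Ideal.add_mem _ h1 h2
    convert this using 1
    have h3 : ∑ a, C (eval x (pderiv a (p * X b))) * (X a - C (x a)) =
      C (eval x p) * (X b - C (x b)) + (∑ a, C (eval x (pderiv a p)) * (X a - C (x a))) * C (x b) := by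
      have hd : ∀ a, eval x (pderiv a (p * X b)) =
          (if a = b then eval x p else 0) + x b * eval x (pderiv a p) := by
        intro a
        rw [Derivation.leibniz, pderiv_X]
        by_cases hab : a = b
        · subst hab; simp
        · simp [Pi.single_apply, hab, Ne.symm hab, fun h => hab (Eq.symm h)]
      rw [Finset.sum_mul]
      have : C (eval x p) * (X b - C (x b)) =
        ∑ a, if a = b then (C (eval x p) * (X b - C (x b)) : MvPolynomial (Fin N) ℂ) else 0 := by simp
      rw [this, ← Finset.sum_add_distrib]
      refine Finset.sum_congr rfl fun a _ => ?_
      rw [hd]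
      by_cases hab : a = b
      · subst hab; simp only [if_true, map_add, map_mul]; ring
      · simp only [hab, if_false, map_add, map_mul, map_zero]; ring
    rw [h3]
    have h4 : ∑ a, C (eval x (pderiv a p)) * ((X a - C (x a)) * (X b - C (x b))) =
      (∑ a, C (eval x (pderiv a p)) * (X a - C (x a))) * (X b - C (x b)) := by
      rw [Finset.sum_mul]
      refine Finset.sum_congr rfl fun a _ => ?_
      ring
    rw [h4]
    simp only [map_mul, eval_X]
    ring

lemma dimA_zero_of_tan {N : ℕ} {T : Set (Fin N → ℂ)} (h : IrrAlg T) {x : Fin N → ℂ} (hx : x ∈ T)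
    (ht : tanSpan T x = ⊥) : dimA T = 0 := by
  have hp := vI_prime h
  have hmx := irr_singleton x
  have hle : vI T ≤ vI {x} := vanishingIdeal_anti_mono (by simpa using hx)
  let π := Ideal.Quotient.mk (vI T)
  have hπ : Function.Surjective π := Ideal.Quotient.mk_surjective
  have hm : ((vI {x}).map π).IsMaximal := by
    refine Ideal.IsMaximal.map_of_surjective_of_ker_le hπ ?_
    rw [Ideal.mk_ker]; exact hle
  have htop : Submodule.map (dL x) ((vI T).restrictScalars ℂ) = ⊤ := by
    apply Submodule.eq_top_of_finrank_eq
    have := tan_finrank T x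
    rw [ht] at this
    simp at this
    rw [this]; simp
  have hg : ∀ g ∈ vI {x}, g ∈ vI T ⊔ (vI {x})^2 := by
    intro g hg
    have h0 : dL x g ∈ Submodule.map (dL x) ((vI T).restrictScalars ℂ) := by rw [htop]; trivial
    obtain ⟨f, hf, hfg⟩ := h0
    have hf' : f ∈ vI T := hf
    have h1 := taylor2 x (g - f)
    have h2 : ∀ a, eval x (pderiv a (g - f)) = 0 := by
      intro a
      have := congrArg (fun φ => φ (Pi.single a 1)) hfg
      simp [dL_apply, Pi.single_apply] at this
      simp [this]
    have h3 : eval x (g - f) = 0 := by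
      rw [map_sub, mem_vI.1 hg x rfl, mem_vI.1 hf' x hx, sub_zero]
    simp only [h2, h3, map_zero, zero_mul, Finset.sum_const_zero, sub_zero] at h1
    have : g = f + (g - f) := by ring
    rw [this]
    exact Submodule.add_mem_sup hf' h1
  have hid : IsIdempotentElem ((vI {x}).map π) := by
    apply le_antisymm Ideal.mul_le_right
    rw [Ideal.map_le_iff_le_comap]
    intro g hgx
    obtain ⟨a, ha, b, hb, rfl⟩ := Submodule.mem_sup.1 (hg g hgx)
    change π (a + b) ∈ ((vI {x}).map π * (vI {x}).map π : Ideal _)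
    rw [map_add, show π a = 0 from Ideal.Quotient.eq_zero_iff_mem.2 ha, zero_add, ← Ideal.map_mul,
      ← pow_two]
    exact Ideal.mem_map_of_mem _ hb
  have hbot : (vI {x}).map π = ⊥ := by
    rcases (Ideal.isIdempotentElem_iff_eq_bot_or_top _ (IsNoetherian.noetherian _)).1 hid with h | h
    · exact h
    · exact absurd h hm.ne_top
  have := dimA_spec h _ hm
  rw [hbot, Ideal.height_bot] at this
  exact_mod_cast this.symm

lemma dimA_le_tan {N : ℕ} {T : Set (Fin N → ℂ)} (h : IrrAlg T) {x : Fin N → ℂ} (hx : x ∈ T) :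
    dimA T ≤ Module.finrank ℂ (tanSpan T x) := by
  obtain ⟨W, hW⟩ := exists_isCompl (Submodule.map (dL x) ((vI T).restrictScalars ℂ))
  have h1 := tan_finrank T x
  have h2 := Submodule.finrank_add_eq_of_isCompl hW
  have h3 : Module.finrank ℂ (Module.Dual ℂ (Fin N → ℂ)) = N := by simp
  have h4 : Module.finrank ℂ W = Module.finrank ℂ (tanSpan T x) := by omega
  let b := Module.finBasis ℂ W
  let ℓ : Fin (Module.finrank ℂ W) → MvPolynomial (Fin N) ℂ := fun j =>
    ∑ i, C ((b j : Module.Dual ℂ (Fin N → ℂ)) (Pi.single i 1)) * (X i - C (x i))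
  have hℓ : ∀ j y, dL y (ℓ j) = b j := by
    intro j y
    ext a
    simp [dL_apply, ℓ, Pi.single_apply, Derivation.leibniz, pderiv_X]
    rw [Finset.sum_eq_single a] <;> simp +contextual
  obtain ⟨T', g1, g2, g3, g4, g5⟩ := krull_cut h x hx (Finset.univ.image ℓ) (by
    intro f hf
    simp only [Finset.mem_image, Finset.mem_univ, true_and] at hf
    obtain ⟨j, rfl⟩ := hf
    simp [ℓ])
  have h5 : tanSpan T' x = ⊥ := by
    rw [eq_bot_iff]
    intro v hv
    rw [mem_tan] at hv
    have hall : ∀ φ : Module.Dual ℂ (Fin N → ℂ), φ v = 0 := by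
      have hT : Submodule.map (dL x) ((vI T).restrictScalars ℂ) ⊔ W ≤
          LinearMap.ker (Module.Dual.eval ℂ _ v) := by
        apply sup_le
        · rintro _ ⟨f, hf, rfl⟩
          exact hv f (vanishingIdeal_anti_mono g2 hf)
        · intro φ hφ
          have := b.mem_span (⟨φ, hφ⟩ : W)
          have h6 : Submodule.map W.subtype ⊤ ≤ LinearMap.ker (Module.Dual.eval ℂ _ v) := by
            rw [← b.span_eq, Submodule.map_span, Submodule.span_le]
            rintro _ ⟨_, ⟨j, rfl⟩, rfl⟩
            have := hv (ℓ j) (mem_vI.2 (g3 (ℓ j) (Finset.mem_image_of_mem _ (Finset.mem_univ _))))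
            rw [hℓ] at this
            exact this
          exact h6 ⟨⟨φ, hφ⟩, trivial, rfl⟩
      rw [hW.sup_eq_top] at hT
      intro φ
      exact hT (Submodule.mem_top (x := φ))
    rw [Submodule.mem_bot]
    ext i
    exact hall (LinearMap.proj i)
  have h6 := dimA_zero_of_tan g1 g4 h5
  have h7 : (Finset.univ.image ℓ).card ≤ Module.finrank ℂ W := by
    refine Finset.card_image_le.trans ?_
    simp
  omega


lemma der_ext {B K : Type} [CommRing B] [Field K] [Algebra ℂ B] [Algebra ℂ K] [Algebra B K]
    [IsScalarTower ℂ B K] [Algebra.FormallyEtale B K] (D : Derivation ℂ B K) :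
    ∃ D' : Derivation ℂ K K, ∀ b, D' (algebraMap B K b) = D b := by
  let φ : TensorProduct B K (Ω[B⁄ℂ]) →ₗ[K] K := LinearMap.liftBaseChange K D.liftKaehlerDifferential
  let e := (KaehlerDifferential.tensorKaehlerEquivOfFormallyEtale ℂ B K).symm
  let D' : Derivation ℂ K K := (φ.comp e.toLinearMap).compDer (KaehlerDifferential.D ℂ K)
  refine ⟨D', fun b => ?_⟩
  change φ (e (KaehlerDifferential.D ℂ K (algebraMap B K b))) = _
  have : e (KaehlerDifferential.D ℂ K (algebraMap B K b)) = 1 ⊗ₜ[B] KaehlerDifferential.D ℂ B b :=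
    KaehlerDifferential.tensorKaehlerEquivOfFormallyEtale_symm_D_algebraMap ..
  rw [this]
  simp [φ]

lemma der_ext_frac {B K : Type} [CommRing B] [IsDomain B] [Field K] [Algebra ℂ B] [Algebra ℂ K]
    [Algebra B K] [IsScalarTower ℂ B K] [IsFractionRing B K] (D : Derivation ℂ B K) :
    ∃ D' : Derivation ℂ K K, ∀ b, D' (algebraMap B K b) = D b := by
  have : Algebra.FormallyEtale B K :=
    Algebra.FormallyEtale.of_isLocalization (Rₘ := K) (nonZeroDivisors B)
  exact der_ext D

lemma der_transc {K : Type} [Field K] [Algebra ℂ K] (x : K) (hx : Transcendental ℂ x) :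
    ∃ D : Derivation ℂ K K, D x ≠ 0 := by
  have hs : AlgebraicIndepOn ℂ id ({x} : Set K) := by
    have : Unique ({x} : Set K) := Set.uniqueSingleton x
    refine algebraicIndependent_unique_type_iff.mpr ?_
    have e : ((default : ({x} : Set K)) : K) = x := (default : ({x} : Set K)).2
    rwa [id, e]
  obtain ⟨t, hxt, ht⟩ := exists_isTranscendenceBasis_superset hs
  have hinj : Function.Injective (aeval ((↑) : t → K) : MvPolynomial t ℂ →ₐ[ℂ] K) := ht.1
  let : Algebra (MvPolynomial t ℂ) K := (aeval ((↑) : t → K)).toRingHom.toAlgebra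
  have : IsScalarTower ℂ (MvPolynomial t ℂ) K := IsScalarTower.of_algebraMap_eq' (by
    ext a; simp [RingHom.algebraMap_toAlgebra])
  have : FaithfulSMul (MvPolynomial t ℂ) K := (faithfulSMul_iff_algebraMap_injective _ _).2 hinj
  let : Algebra (FractionRing (MvPolynomial t ℂ)) K := FractionRing.liftAlgebra _ _
  have : IsScalarTower (MvPolynomial t ℂ) (FractionRing (MvPolynomial t ℂ)) K :=
    FractionRing.isScalarTower_liftAlgebra _ _
  have hA : Algebra.IsAlgebraic (MvPolynomial t ℂ) K := by
    refine ⟨fun z => ?_⟩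
    have := ht.isAlgebraic.isAlgebraic z
    obtain ⟨p, hp0, hp⟩ := this
    let φ : MvPolynomial t ℂ ≃ₐ[ℂ] Algebra.adjoin ℂ (Set.range ((↑) : t → K)) := ht.1.aevalEquiv
    refine ⟨p.map (φ.symm : _ →+* _), ?_, ?_⟩
    · rwa [Ne, Polynomial.map_eq_zero_iff φ.symm.injective]
    · rw [Polynomial.aeval_def, Polynomial.eval₂_map, ← hp, Polynomial.aeval_def]
      congr 1
      ext w
      obtain ⟨w, rfl⟩ := φ.surjective w
      simp [RingHom.algebraMap_toAlgebra, φ]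
  have : Algebra.IsAlgebraic (FractionRing (MvPolynomial t ℂ)) K :=
    (IsFractionRing.comap_isAlgebraic_iff (A := MvPolynomial t ℂ)).1 hA
  have : Algebra.FormallyEtale (MvPolynomial t ℂ) (FractionRing (MvPolynomial t ℂ)) :=
    Algebra.FormallyEtale.of_isLocalization (nonZeroDivisors _)
  have : CharZero (FractionRing (MvPolynomial t ℂ)) :=
    charZero_of_injective_algebraMap (IsFractionRing.injective (MvPolynomial t ℂ) _)
  have : Algebra.FormallyEtale (FractionRing (MvPolynomial t ℂ)) K :=
    Algebra.FormallyEtale.of_isSeparable _ _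
  have : Algebra.FormallyEtale (MvPolynomial t ℂ) K :=
    Algebra.FormallyEtale.comp _ (FractionRing (MvPolynomial t ℂ)) _
  have hx' : x ∈ t := hxt rfl
  obtain ⟨D, hD⟩ := der_ext (mkDerivation ℂ (fun _ => 1 : t → K))
  refine ⟨D, ?_⟩
  have := hD (X ⟨x, hx'⟩)
  rw [mkDerivation_X] at this
  have h2 : algebraMap (MvPolynomial t ℂ) K (X ⟨x, hx'⟩) = x := by
    simp [RingHom.algebraMap_toAlgebra]
  rw [h2] at this
  simp [this]

lemma const_of_der {K : Type} [Field K] [Algebra ℂ K] (x : K)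
    (h : ∀ D : Derivation ℂ K K, D x = 0) : ∃ c : ℂ, algebraMap ℂ K c = x := by
  have : IsAlgebraic ℂ x := by
    by_contra hx
    obtain ⟨D, hD⟩ := der_transc x hx
    exact hD (h D)
  have hi := minpoly.irreducible this.isIntegral
  exact minpoly.mem_range_of_degree_eq_one ℂ x (IsAlgClosed.degree_eq_one_of_irreducible ℂ hi)

lemma der_val {K : Type} [Field K] [Algebra ℂ K] (D : Derivation ℂ K K) (x : K) (hx : D x ≠ 0) :
    ∃ O : ValuationSubring K, (∀ z, D z = 0 → z ∈ O) ∧ x ∉ O := by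
  let K₀ : Subfield K :=
    { carrier := {z | D z = 0}
      mul_mem' := by
        intro a b (ha : D a = 0) (hb : D b = 0)
        change D (a * b) = 0
        simp [ha, hb]
      one_mem' := by change D 1 = 0; simp
      add_mem' := by
        intro a b (ha : D a = 0) (hb : D b = 0)
        change D (a + b) = 0
        simp [ha, hb]
      zero_mem' := by change D 0 = 0; simp
      neg_mem' := by
        intro a (ha : D a = 0)
        change D (-a) = 0
        simp [ha]
      inv_mem' := by
        intro a (ha : D a = 0)
        change D a⁻¹ = 0
        rw [D.leibniz_inv, ha]; simp }
  have h0 : ∀ z : K₀, D z = 0 := fun z => z.2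
  have hni : ¬ IsIntegral K₀ x := by
    intro hi
    have key : ∀ p : Polynomial K₀, D (Polynomial.aeval x p) = Polynomial.aeval x p.derivative * D x := by
      intro p
      induction p using Polynomial.induction_on' with
      | add p q hp hq => simp [hp, hq, add_mul]
      | monomial n a =>
        have h0a : D (algebraMap K₀ K a) = 0 := h0 a
        simp only [Polynomial.aeval_monomial, Polynomial.derivative_monomial, Derivation.leibniz,
          h0a, Derivation.leibniz_pow, smul_eq_mul, nsmul_eq_mul, map_mul,
          map_natCast]
        ring
    have h1 := key (minpoly K₀ x)
    rw [minpoly.aeval, map_zero] at h1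
    have : CharZero K := charZero_of_injective_algebraMap (algebraMap ℂ K).injective
    have : CharZero K₀ := ⟨fun a b h => by
      have := congrArg (Subtype.val : K₀ → K) h
      exact_mod_cast this⟩
    have hsep : (minpoly K₀ x).Separable := (minpoly.irreducible hi).separable
    have := hsep.aeval_derivative_ne_zero (minpoly.aeval K₀ x)
    rcases mul_eq_zero.1 h1.symm with h | h
    · exact this h
    · exact hx h
  by_contra hcon
  push Not at hcon
  have h1 : x ∈ (⨅ V : {V : ValuationSubring K // (K₀ : Set K) ⊆ V.toSubring}, V.1.toSubring) := by
    rw [Subring.mem_iInf]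
    rintro ⟨V, hV⟩
    exact hcon V fun z hz => hV hz
  rw [iInf_valuationSubring_superset] at h1
  have h2 : IsIntegral (Subring.closure (K₀ : Set K)) x := h1
  obtain ⟨p, hp, hpx⟩ := h2
  have hle : Subring.closure (K₀ : Set K) ≤ K₀.toSubring := Subring.closure_le.2 (le_refl _)
  apply hni
  refine ⟨p.map (Subring.inclusion hle), hp.map _, ?_⟩
  rw [Polynomial.eval₂_map, ← hpx]
  rfl


structure Setup (N n : ℕ) (Y : Set (Fin N → ℂ)) : Prop where
  irr : IrrAlg Y
  cone : IsCone Y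
  ne : Y ≠ {0}
  nd : Submodule.span ℂ Y = ⊤
  sm : ∀ x ∈ Y, x ≠ 0 → Module.finrank ℂ (tanSpan Y x) = n + 1
  dim : n + 1 ≤ dimA Y

lemma right_inv {K : Type} [Field K] {m n : Type} [Fintype m] [Fintype n] [DecidableEq m]
    (A : Matrix m n K) (h : LinearIndependent K A.row) : ∃ C : Matrix n m K, A * C = 1 := by
  have hr := h.rank_matrix
  rw [← Matrix.mulVec_surjective_iff_exists_right_inverse]
  have : LinearMap.range A.mulVecLin = ⊤ := by
    apply Submodule.eq_top_of_finrank_eq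
    rw [Module.finrank_fintype_fun_eq_card]
    exact hr
  exact LinearMap.range_eq_top.1 this

lemma jac_exists {N n : ℕ} {Y : Set (Fin N → ℂ)} (hY : Setup N n Y) {x : Fin N → ℂ} (hx : x ∈ Y)
    (h0 : x ≠ 0) : ∃ ρ, ρ + (n + 1) = N ∧ ∃ f : Fin ρ → MvPolynomial (Fin N) ℂ,
      (∀ i, f i ∈ vI Y) ∧ ∃ C : Matrix (Fin N) (Fin ρ) ℂ,
      (Matrix.of fun i b => eval x (pderiv b (f i))) * C = 1 := by
  have h1 := tan_finrank Y x
  rw [hY.sm x hx h0] at h1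
  refine ⟨_, h1, ?_⟩
  let b := Module.finBasis ℂ (Submodule.map (dL x) ((vI Y).restrictScalars ℂ))
  have hb : ∀ i, ∃ f ∈ vI Y, dL x f = (b i : Module.Dual ℂ (Fin N → ℂ)) := fun i => (b i).2
  choose f hf hfb using hb
  refine ⟨f, hf, ?_⟩
  apply right_inv
  have hli : LinearIndependent ℂ (fun i => (b i : Module.Dual ℂ (Fin N → ℂ))) :=
    b.linearIndependent.map' (Submodule.subtype _) (by simp)
  let ev : Module.Dual ℂ (Fin N → ℂ) →ₗ[ℂ] (Fin N → ℂ) :=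
    LinearMap.pi fun a => LinearMap.applyₗ (Pi.single a 1)
  have hev : LinearMap.ker ev = ⊥ := by
    rw [LinearMap.ker_eq_bot']
    intro φ hφ
    ext a
    simpa [ev] using congrFun hφ a
  have := hli.map' ev hev
  have he : (Matrix.of fun i b => eval x (pderiv b (f i))).row =
      (⇑ev ∘ fun i => (b i : Module.Dual ℂ (Fin N → ℂ))) := by
    ext i a
    simp [ev, Matrix.row, ← hfb, dL_apply, Pi.single_apply]
  rw [he]
  exact this

def TanSec {N : ℕ} (Y : Set (Fin N → ℂ)) (s : Fin N → MvPolynomial (Fin N) ℂ) : Prop :=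
  ∀ p ∈ Y, (fun a => eval p (s a)) ∈ tanSpan Y p

lemma sec_exists {N n : ℕ} {Y : Set (Fin N → ℂ)} (hY : Setup N n Y) {x : Fin N → ℂ} (hx : x ∈ Y)
    (h0 : x ≠ 0) : ∃ g : MvPolynomial (Fin N) ℂ, ∃ ρ : ℕ, ∃ f : Fin ρ → MvPolynomial (Fin N) ℂ,
      ∃ M : Fin N → Fin ρ → MvPolynomial (Fin N) ℂ, eval x g ≠ 0 ∧ (∀ i, f i ∈ vI Y) ∧
      ∀ b, TanSec Y (fun a => (if a = b then g else 0) - ∑ i, M a i * pderiv b (f i)) := by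
  obtain ⟨ρ, hρ, f, hf, C₀, hC⟩ := jac_exists hY hx h0
  obtain ⟨c, hc⟩ := Function.ne_iff.1 h0
  let J : Matrix (Fin ρ) (Fin N) (MvPolynomial (Fin N) ℂ) := Matrix.of fun i b => pderiv b (f i)
  let Cm : Matrix (Fin N) (Fin ρ) (MvPolynomial (Fin N) ℂ) := C₀.map C
  let G := J * Cm
  let M := Cm * G.adjugate
  let E : Matrix (Fin N) (Fin N) (MvPolynomial (Fin N) ℂ) := G.det • 1 - M * J
  have hJE : J * E = 0 := by
    simp only [E, M, Matrix.mul_sub, ← Matrix.mul_assoc]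
    change _ - G * G.adjugate * J = 0
    rw [Matrix.mul_adjugate]
    simp
  have hGev : ∀ p, eval p G.det = Matrix.det ((Matrix.of fun i b => eval p (pderiv b (f i))) * C₀) := by
    intro p
    rw [RingHom.map_det]
    congr 1
    simp only [G, RingHom.mapMatrix_apply]
    rw [Matrix.map_mul]
    congr 1
    ext i j
    simp [Cm]
  refine ⟨X c * G.det * G.det, ρ, f, fun a i => X c * G.det * M a i, ?_, hf, ?_⟩
  · rw [map_mul, map_mul, hGev x, hC]
    simpa using hc
  intro b p hp
  have hE : (fun a => eval p ((if a = b then X c * G.det * G.det else 0) -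
      ∑ i, X c * G.det * M a i * pderiv b (f i))) =
      (p c * eval p G.det) • (fun a => eval p (E a b)) := by
    ext a
    simp only [E, Matrix.sub_apply, Matrix.smul_apply, Matrix.one_apply, Matrix.mul_apply, Pi.smul_apply,
      map_sub, map_sum, map_mul, smul_eq_mul, eval_X, J, Matrix.of_apply, mul_sub, Finset.mul_sum]
    congr 1
    · split_ifs <;> simp [mul_assoc]
    · exact Finset.sum_congr rfl fun i _ => by ring
  rw [hE]
  by_cases hz : p c * eval p G.det = 0
  · rw [hz, zero_smul]; exact zero_mem _
  apply Submodule.smul_mem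
  have hp0 : p ≠ 0 := by rintro rfl; simp at hz
  have hdet : eval p G.det ≠ 0 := right_ne_zero_of_mul hz
  rw [hGev] at hdet
  let A : Matrix (Fin ρ) (Fin N) ℂ := Matrix.of fun i b => eval p (pderiv b (f i))
  have hle : tanSpan Y p ≤ LinearMap.ker A.mulVecLin := by
    intro v hv
    rw [LinearMap.mem_ker]
    ext i
    have := mem_tan.1 hv (f i) (hf i)
    rw [dL_apply] at this
    simpa [A, Matrix.mulVec, dotProduct, mul_comm] using this
  have hsurj : Function.Surjective A.mulVecLin := by
    change Function.Surjective A.mulVec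
    rw [Matrix.mulVec_surjective_iff_exists_right_inverse]
    refine ⟨C₀ * (A * C₀)⁻¹, ?_⟩
    rw [← Matrix.mul_assoc, Matrix.mul_nonsing_inv _ (isUnit_iff_ne_zero.2 hdet)]
  have hfr := LinearMap.finrank_range_add_finrank_ker A.mulVecLin
  rw [LinearMap.range_eq_top.2 hsurj, finrank_top] at hfr
  simp only [Module.finrank_fintype_fun_eq_card, Fintype.card_fin] at hfr
  have : tanSpan Y p = LinearMap.ker A.mulVecLin := by
    apply Submodule.eq_of_le_of_finrank_eq hle
    rw [hY.sm p hp hp0]; omega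
  rw [this, LinearMap.mem_ker]
  ext i
  have h2 := congrArg (eval p) (congrFun (congrFun hJE i) b)
  simpa [A, Matrix.mulVec, dotProduct, Matrix.mul_apply, J] using h2

lemma chain_rule {σ A M : Type} [Fintype σ] [CommRing A] [Algebra ℂ A] [AddCommGroup M] [Module A M]
    [Module ℂ M] (D : Derivation ℂ A M) (φ : σ → A) (f : MvPolynomial σ ℂ) :
    D (aeval φ f) = ∑ i, aeval φ (pderiv i f) • D (φ i) := by
  induction f using MvPolynomial.induction_on with
  | C a => simp [algHom_C]
  | add p q hp hq => simp [hp, hq, add_smul, Finset.sum_add_distrib]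
  | mul_X p j hp =>
    rw [map_mul, Derivation.leibniz, hp, aeval_X, Finset.smul_sum]
    simp only [Derivation.leibniz, map_add, add_smul, Finset.sum_add_distrib, smul_eq_mul, map_mul,
      aeval_X, pderiv_X]
    congr 1
    · rw [Finset.sum_eq_single j]
      · simp
      · intro b _ hb; simp [Pi.single_apply, hb.symm]
      · simp
    · exact Finset.sum_congr rfl fun i _ => by rw [smul_smul]

lemma tan_smul {N : ℕ} {Y : Set (Fin N → ℂ)} (hc : IsCone Y) (x v : Fin N → ℂ) (c : ℂ) (hc0 : c ≠ 0)
    (hv : v ∈ tanSpan Y (c • x)) : v ∈ tanSpan Y x := by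
  rw [mem_tan] at hv ⊢
  intro f hf
  have h1 : dil c⁻¹ f ∈ vI Y := mem_vI.2 fun y hy => by
    rw [eval_dil]; exact mem_vI.1 hf _ (hc.2 _ _ hy)
  have h2 := hv _ h1
  rw [dL_apply] at h2 ⊢
  have h3 : ∀ i, eval (c • x) (pderiv i (dil c⁻¹ f)) = c⁻¹ * eval x (pderiv i f) := by
    intro i
    rw [dil, chain_rule, Finset.sum_eq_single i]
    · have := eval_dil c⁻¹ (pderiv i f) (c • x)
      rw [smul_smul, inv_mul_cancel₀ hc0, one_smul, dil] at this
      rw [smul_eq_mul, map_mul, this]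
      simp [Derivation.leibniz, mul_comm]
    · intro b _ hb; simp [Derivation.leibniz, pderiv_X, Pi.single_apply, hb.symm]
    · simp
  simp only [h3] at h2
  have : c⁻¹ * ∑ i, v i * eval x (pderiv i f) = 0 := by
    rw [← h2, Finset.mul_sum]; exact Finset.sum_congr rfl fun i _ => by ring
  simpa [hc0] using this

lemma tan_self {N : ℕ} {Y : Set (Fin N → ℂ)} (hc : IsCone Y) {x : Fin N → ℂ} (hx : x ∈ Y) :
    x ∈ tanSpan Y x := by
  rw [mem_tan]
  intro f hf
  have h0 : lin1 x 0 f = 0 := by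
    apply Polynomial.funext
    intro c
    rw [eval_lin1, add_zero]
    simpa using mem_vI.1 hf _ (hc.2 c _ hx)
  have h1 : Polynomial.derivative (lin1 x 0 f) = 0 := by rw [h0]; simp
  rw [lin1, ← Polynomial.derivative'_apply, chain_rule] at h1
  have h2 := congrArg (Polynomial.eval 1) h1
  rw [dL_apply, ← Polynomial.eval_zero (x := (1:ℂ)), ← h2, Polynomial.eval_finsetSum]
  refine Finset.sum_congr rfl fun i _ => ?_
  have := eval_lin1 1 (pderiv i f) x 0
  rw [lin1, one_smul, add_zero] at this
  rw [smul_eq_mul, Polynomial.eval_mul, this, mul_comm]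
  simp [Polynomial.derivative'_apply]


/-- evaluation of a polynomial at a tuple of points -/
abbrev evT {N m : ℕ} (p : Fin m → Fin N → ℂ) (g : MvPolynomial (Fin m × Fin N) ℂ) : ℂ :=
  eval (fun a => p a.1 a.2) g

def GenP {N : ℕ} (m : ℕ) (Y : Set (Fin N → ℂ)) (P : (Fin m → Fin N → ℂ) → Prop) : Prop :=
  ∃ g : MvPolynomial (Fin m × Fin N) ℂ, (∃ p, (∀ i, p i ∈ Y) ∧ evT p g ≠ 0) ∧
    ∀ p, (∀ i, p i ∈ Y ∧ p i ≠ 0) → evT p g ≠ 0 → P p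

/-- substitute a single variable point -/
def subst1 {N m : ℕ} (p : Fin m → Fin N → ℂ) (i : Fin m) (g : MvPolynomial (Fin m × Fin N) ℂ) :
    MvPolynomial (Fin N) ℂ :=
  aeval (fun a : Fin m × Fin N => if a.1 = i then X a.2 else C (p a.1 a.2)) g

lemma eval_subst1 {N m : ℕ} (p : Fin m → Fin N → ℂ) (i : Fin m) (g : MvPolynomial (Fin m × Fin N) ℂ)
    (y : Fin N → ℂ) : eval y (subst1 p i g) = evT (Function.update p i y) g := by
  rw [subst1, evT, ← coe_aeval_eq_eval, ← coe_aeval_eq_eval]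
  change ((aeval y).comp (aeval _)) g = aeval _ g
  congr 1
  apply MvPolynomial.algHom_ext
  rintro ⟨j, a⟩
  by_cases h : j = i
  · subst h; simp
  · simp [h]

lemma genT_two {N m : ℕ} {Y : Set (Fin N → ℂ)} (hY : IrrAlg Y) {g₁ g₂ : MvPolynomial (Fin m × Fin N) ℂ}
    {p₁ p₂ : Fin m → Fin N → ℂ} (h₁ : ∀ i, p₁ i ∈ Y) (h₂ : ∀ i, p₂ i ∈ Y)
    (hg₁ : evT p₁ g₁ ≠ 0) (hg₂ : evT p₂ g₂ ≠ 0) :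
    ∃ p : Fin m → Fin N → ℂ, (∀ i, p i ∈ Y) ∧ evT p g₁ ≠ 0 ∧ evT p g₂ ≠ 0 := by
  have key : ∀ s : Finset (Fin m), ∃ p q : Fin m → Fin N → ℂ, (∀ i, p i ∈ Y) ∧ (∀ i, q i ∈ Y) ∧
      (∀ i ∈ s, p i = q i) ∧ evT p g₁ ≠ 0 ∧ evT q g₂ ≠ 0 := by
    intro s
    induction s using Finset.induction_on with
    | empty => exact ⟨p₁, p₂, h₁, h₂, by simp, hg₁, hg₂⟩
    | insert i s hi ih =>
      obtain ⟨p, q, hp, hq, hs, h1, h2⟩ := ih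
      obtain ⟨c, hc, hc1, hc2⟩ := irr_two hY (f := subst1 p i g₁) (g := subst1 q i g₂) (hp i) (hq i)
        (by rw [eval_subst1, Function.update_eq_self]; exact h1)
        (by rw [eval_subst1, Function.update_eq_self]; exact h2)
      rw [eval_subst1] at hc1 hc2
      refine ⟨_, _, ?_, ?_, ?_, hc1, hc2⟩
      · intro j
        by_cases h : j = i
        · subst h; simpa using hc
        · simpa [h] using hp j
      · intro j
        by_cases h : j = i
        · subst h; simpa using hc
        · simpa [h] using hq j
      · intro j hj
        by_cases h : j = i
        · subst h; simp
        · simpa [h] using hs j (by simpa [h] using hj)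
  obtain ⟨p, q, hp, hq, hs, h1, h2⟩ := key Finset.univ
  have : p = q := funext fun i => hs i (Finset.mem_univ i)
  subst this
  exact ⟨p, hp, h1, h2⟩

lemma GenP.and {N m : ℕ} {Y : Set (Fin N → ℂ)} (hY : IrrAlg Y) {P Q : (Fin m → Fin N → ℂ) → Prop}
    (hP : GenP m Y P) (hQ : GenP m Y Q) : GenP m Y (fun p => P p ∧ Q p) := by
  obtain ⟨g₁, ⟨p₁, h₁, h₁'⟩, hP⟩ := hP
  obtain ⟨g₂, ⟨p₂, h₂, h₂'⟩, hQ⟩ := hQ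
  obtain ⟨p, hp, h1, h2⟩ := genT_two hY h₁ h₂ h₁' h₂'
  refine ⟨g₁ * g₂, ⟨p, hp, by rw [evT, map_mul]; exact mul_ne_zero h1 h2⟩, fun q hq h => ?_⟩
  rw [evT, map_mul] at h
  exact ⟨hP q hq (left_ne_zero_of_mul h), hQ q hq (right_ne_zero_of_mul h)⟩

lemma GenP.mono {N m : ℕ} {Y : Set (Fin N → ℂ)} {P Q : (Fin m → Fin N → ℂ) → Prop}
    (hP : GenP m Y P) (h : ∀ p, (∀ i, p i ∈ Y ∧ p i ≠ 0) → P p → Q p) : GenP m Y Q := by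
  obtain ⟨g, h1, h2⟩ := hP
  exact ⟨g, h1, fun p hp hg => h p hp (h2 p hp hg)⟩

lemma GenP.generically {N m : ℕ} {Y : Set (Fin N → ℂ)} {P : (Fin m → Fin N → ℂ) → Prop}
    (hP : GenP m Y P) : Generically m Y P := by
  obtain ⟨g, ⟨p, hp, hg⟩, h2⟩ := hP
  refine ⟨{q | evT q g = 0}, ⟨{g}, by simp⟩, fun h => hg (h hp), fun q hq hB => h2 q hq hB⟩

lemma Setup.exists_ne {N n : ℕ} {Y : Set (Fin N → ℂ)} (hY : Setup N n Y) : ∃ x ∈ Y, x ≠ 0 := by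
  by_contra h
  push Not at h
  apply hY.ne
  ext x
  exact ⟨fun hx => h x hx, fun hx => by rw [Set.mem_singleton_iff.1 hx]; exact hY.cone.1⟩

lemma GenP.nonzero {N n m : ℕ} {Y : Set (Fin N → ℂ)} (hY : Setup N n Y) (Q : MvPolynomial (Fin m × Fin N) ℂ)
    (hQ : ∃ p, (∀ i, p i ∈ Y) ∧ evT p Q ≠ 0) : ∃ p, (∀ i, p i ∈ Y ∧ p i ≠ 0) ∧ evT p Q ≠ 0 := by
  obtain ⟨x, hx, h0⟩ := hY.exists_ne
  obtain ⟨c, hc⟩ := Function.ne_iff.1 h0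
  obtain ⟨q, hq, hq'⟩ := hQ
  obtain ⟨p, hp, h1, h2⟩ := genT_two hY.irr (g₁ := Q) (g₂ := ∏ i : Fin m, X (i, c)) hq
    (p₂ := fun _ => x) (fun _ => hx) hq' (by
      simp only [evT, map_prod, eval_X]
      exact Finset.prod_ne_zero_iff.2 fun _ _ => hc)
  refine ⟨p, fun i => ⟨hp i, fun h => ?_⟩, h1⟩
  simp only [evT, map_prod, eval_X] at h2
  exact Finset.prod_ne_zero_iff.1 h2 i (Finset.mem_univ _) (by rw [h]; rfl)

lemma GenP.exists {N n m : ℕ} {Y : Set (Fin N → ℂ)} (hY : Setup N n Y) {P : (Fin m → Fin N → ℂ) → Prop}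
    (hP : GenP m Y P) : ∃ p, (∀ i, p i ∈ Y ∧ p i ≠ 0) ∧ P p := by
  obtain ⟨g, h1, h2⟩ := hP
  obtain ⟨p, hp, h⟩ := GenP.nonzero hY g h1
  exact ⟨p, hp, h2 p hp h⟩

lemma GenP.pull {N n m m' : ℕ} {Y : Set (Fin N → ℂ)} (hY : Setup N n Y) {P : (Fin m → Fin N → ℂ) → Prop}
    (hP : GenP m Y P) (e : Fin m → Fin m') (he : Function.Injective e) :
    GenP m' Y (fun p => P (fun i => p (e i))) := by
  obtain ⟨g, ⟨p, hp, hg⟩, h2⟩ := hP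
  have hev : ∀ q : Fin m' → Fin N → ℂ, evT q (rename (Prod.map e id) g) = evT (fun i => q (e i)) g := by
    intro q
    rw [evT, eval_rename]
    rfl
  refine ⟨rename (Prod.map e id) g, ⟨Function.extend e p (fun _ => 0), fun j => ?_, ?_⟩, ?_⟩
  · by_cases h : ∃ i, e i = j
    · obtain ⟨i, rfl⟩ := h
      rw [he.extend_apply]; exact hp i
    · rw [Function.extend_apply' _ _ _ h]; exact hY.cone.1
  · rw [hev]; simpa [he.extend_apply] using hg
  · intro q hq h
    rw [hev] at h
    exact h2 _ (fun i => hq _) h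

lemma sec_value {N n : ℕ} {Y : Set (Fin N → ℂ)} (hY : Setup N n Y) {x v : Fin N → ℂ} (hx : x ∈ Y)
    (h0 : x ≠ 0) (hv : v ∈ tanSpan Y x) : ∃ s, TanSec Y s ∧ ∀ a, eval x (s a) = v a := by
  obtain ⟨g, ρ, f, M, hg, hf, hE⟩ := sec_exists hY hx h0
  refine ⟨fun a => ∑ b, C ((eval x g)⁻¹ * v b) * ((if a = b then g else 0) -
    ∑ i, M a i * pderiv b (f i)), fun p hp => ?_, fun a => ?_⟩
  · have : (fun a => eval p (∑ b, C ((eval x g)⁻¹ * v b) * ((if a = b then g else 0) -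
        ∑ i, M a i * pderiv b (f i)))) = ∑ b, ((eval x g)⁻¹ * v b) •
        (fun a => eval p ((if a = b then g else 0) - ∑ i, M a i * pderiv b (f i))) := by
      ext a
      simp only [map_sum, map_mul, eval_C, Finset.sum_apply, Pi.smul_apply, smul_eq_mul]
    rw [this]
    exact Submodule.sum_mem _ fun b _ => Submodule.smul_mem _ _ (hE b p hp)
  · have h1 : ∀ i, ∑ b, v b * eval x (pderiv b (f i)) = 0 := fun i => by
      rw [← dL_apply]; exact mem_tan.1 hv _ (hf i)
    simp only [map_sum, map_mul, eval_C, map_sub, mul_sub, Finset.sum_sub_distrib]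
    have h2 : ∑ b, (eval x g)⁻¹ * v b * ∑ i, eval x (M a i) * eval x (pderiv b (f i)) = 0 := by
      simp only [Finset.mul_sum]
      rw [Finset.sum_comm]
      apply Finset.sum_eq_zero
      intro i _
      have : ∑ b, (eval x g)⁻¹ * v b * (eval x (M a i) * eval x (pderiv b (f i))) =
        (eval x g)⁻¹ * eval x (M a i) * ∑ b, v b * eval x (pderiv b (f i)) := by
        rw [Finset.mul_sum]; exact Finset.sum_congr rfl fun b _ => by ring
      rw [this, h1, mul_zero]
    rw [h2, sub_zero, Finset.sum_eq_single a]
    · simp; field_simp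
    · intro b _ hb; simp [hb.symm]
    · simp

/-- lower semicontinuity of the dimension of spans of tangent spaces -/
lemma semicont {N n m : ℕ} {Y : Set (Fin N → ℂ)} (hY : Setup N n Y) (Λ : Submodule ℂ (Fin N → ℂ))
    (q : Fin m → Fin N → ℂ) (hq : ∀ i, q i ∈ Y ∧ q i ≠ 0) :
    ∃ g, evT q g ≠ 0 ∧ ∀ p : Fin m → Fin N → ℂ, (∀ i, p i ∈ Y) → evT p g ≠ 0 →
      Module.finrank ℂ (Λ ⊔ ⨆ i, tanSpan Y (q i) : Submodule ℂ (Fin N → ℂ)) ≤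
      Module.finrank ℂ (Λ ⊔ ⨆ i, tanSpan Y (p i) : Submodule ℂ (Fin N → ℂ)) := by
  let S : Set (Fin N → ℂ) := (Λ : Set (Fin N → ℂ)) ∪ ⋃ i, (tanSpan Y (q i) : Set (Fin N → ℂ))
  have hS : Submodule.span ℂ S = Λ ⊔ ⨆ i, tanSpan Y (q i) := by
    simp [S, Submodule.span_union, Submodule.span_iUnion]
  obtain ⟨b, hbS, hbs, hli⟩ := exists_linearIndependent ℂ S
  have hbf : b.Finite := hli.setFinite
  have : Fintype b := hbf.fintype
  have hcard : Fintype.card b = Module.finrank ℂ (Λ ⊔ ⨆ i, tanSpan Y (q i) : Submodule ℂ (Fin N → ℂ)) := by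
    rw [← hS, ← hbs]
    have := finrank_span_eq_card hli
    rw [← this, Subtype.range_coe]
  have hsec : ∀ w : b, ∃ s : Fin N → MvPolynomial (Fin m × Fin N) ℂ, (∀ a, evT q (s a) = w.1 a) ∧
      ∀ p : Fin m → Fin N → ℂ, (∀ i, p i ∈ Y) → (fun a => evT p (s a)) ∈ Λ ⊔ ⨆ i, tanSpan Y (p i) := by
    rintro ⟨w, hw⟩
    rcases hbS hw with h | h
    · refine ⟨fun a => C (w a), fun a => by simp, fun p hp => ?_⟩
      simp only [evT, eval_C]
      exact Submodule.mem_sup_left h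
    · obtain ⟨i, hi⟩ := Set.mem_iUnion.1 h
      obtain ⟨s, hs1, hs2⟩ := sec_value hY (hq i).1 (hq i).2 hi
      refine ⟨fun a => rename (fun b => (i, b)) (s a), fun a => ?_, fun p hp => ?_⟩
      · rw [evT, eval_rename]; exact hs2 a
      · simp only [evT, eval_rename]
        exact Submodule.mem_sup_right (Submodule.mem_iSup_of_mem i (hs1 _ (hp i)))
  choose s hs1 hs2 using hsec
  let A : (Fin m → Fin N → ℂ) → Matrix b (Fin N) ℂ := fun p => Matrix.of fun w a => evT p (s w a)
  have hA : (A q).row = (fun w : b => (w : Fin N → ℂ)) := by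
    ext w a; simp [A, Matrix.row, hs1]
  obtain ⟨C₀, hC₀⟩ := right_inv (A q) (by rw [hA]; exact hli)
  let Sm : Matrix b (Fin N) (MvPolynomial (Fin m × Fin N) ℂ) := Matrix.of fun w a => s w a
  let Cm : Matrix (Fin N) b (MvPolynomial (Fin m × Fin N) ℂ) := C₀.map C
  let G : Matrix b b (MvPolynomial (Fin m × Fin N) ℂ) := Sm * Cm
  have hG : ∀ p, evT p G.det = (A p * C₀).det := by
    intro p
    rw [evT, RingHom.map_det]
    congr 1
    simp only [G, RingHom.mapMatrix_apply]
    rw [Matrix.map_mul]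
    congr 1
    ext i j
    simp [Cm]
  refine ⟨G.det, by rw [hG, hC₀]; simp, fun p hp hdet => ?_⟩
  rw [hG] at hdet
  have hli' : LinearIndependent ℂ (A p).row := by
    rw [← Matrix.vecMul_injective_iff]
    intro u v huv
    have h1 : Matrix.vecMul u (A p * C₀) = Matrix.vecMul v (A p * C₀) := by
      rw [← Matrix.vecMul_vecMul, ← Matrix.vecMul_vecMul]
      exact congrArg (fun z => Matrix.vecMul z C₀) huv
    have h2 := (Matrix.isUnit_iff_isUnit_det _).2 (isUnit_iff_ne_zero.2 hdet)
    exact Matrix.vecMul_injective_of_isUnit h2 h1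
  rw [← hcard, ← finrank_span_eq_card hli']
  apply Submodule.finrank_mono
  rw [Submodule.span_le]
  rintro _ ⟨w, rfl⟩
  exact hs2 w p hp

lemma dd_exists {N n : ℕ} {Y : Set (Fin N → ℂ)} (hY : Setup N n Y) (m : ℕ) :
    ∃ d : ℕ, (∀ p : Fin m → Fin N → ℂ, (∀ i, p i ∈ Y ∧ p i ≠ 0) →
      Module.finrank ℂ (⨆ i, tanSpan Y (p i) : Submodule ℂ (Fin N → ℂ)) ≤ d) ∧
      GenP m Y (fun p => Module.finrank ℂ (⨆ i, tanSpan Y (p i) : Submodule ℂ (Fin N → ℂ)) = d) := by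
  let P : ℕ → Prop := fun d => ∃ p : Fin m → Fin N → ℂ, (∀ i, p i ∈ Y ∧ p i ≠ 0) ∧
    Module.finrank ℂ (⨆ i, tanSpan Y (p i) : Submodule ℂ (Fin N → ℂ)) = d
  obtain ⟨x, hx, h0⟩ := hY.exists_ne
  have hb : ∀ p : Fin m → Fin N → ℂ,
    Module.finrank ℂ (⨆ i, tanSpan Y (p i) : Submodule ℂ (Fin N → ℂ)) ≤ N := fun p => by
    simpa using Submodule.finrank_le (⨆ i, tanSpan Y (p i) : Submodule ℂ (Fin N → ℂ))
  have hP := Nat.findGreatest_spec (P := P) (n := N) (hb fun _ => x) ⟨fun _ => x, fun _ => ⟨hx, h0⟩, rfl⟩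
  have hmax : ∀ p : Fin m → Fin N → ℂ, (∀ i, p i ∈ Y ∧ p i ≠ 0) →
      Module.finrank ℂ (⨆ i, tanSpan Y (p i) : Submodule ℂ (Fin N → ℂ)) ≤ Nat.findGreatest P N :=
    fun p hp => Nat.le_findGreatest (hb p) ⟨p, hp, rfl⟩
  obtain ⟨q, hq, hqd⟩ := hP
  refine ⟨_, hmax, ?_⟩
  obtain ⟨g, hg1, hg2⟩ := semicont hY ⊥ q hq
  refine ⟨g, ⟨q, fun i => (hq i).1, hg1⟩, fun p hp hg => le_antisymm (hmax p hp) ?_⟩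
  have := hg2 p (fun i => (hp i).1) hg
  rwa [bot_sup_eq, bot_sup_eq, hqd] at this


lemma eval_aev {σ τ : Type} (y : τ → ℂ) (φ : σ → MvPolynomial τ ℂ) (G : MvPolynomial σ ℂ) :
    eval y (aeval φ G) = eval (fun a => eval y (φ a)) G := by
  rw [← coe_aeval_eq_eval, ← coe_aeval_eq_eval]
  change ((aeval y).comp (aeval φ)) G = aeval _ G
  congr 1
  apply MvPolynomial.algHom_ext
  intro a; simp

lemma zero_of_pderiv_closed {N : ℕ} (I : Set (MvPolynomial (Fin N) ℂ)) (h0 : ∀ f ∈ I, eval 0 f = 0)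
    (hd : ∀ f ∈ I, ∀ a, pderiv a f ∈ I) : ∀ f ∈ I, f = 0 := by
  have key : ∀ k : ℕ, ∀ m : Fin N →₀ ℕ, m.degree = k → ∀ f ∈ I, coeff m f = 0 := by
    intro k
    induction k with
    | zero =>
      intro m hm f hf
      rw [Finsupp.degree_eq_zero_iff] at hm
      subst hm
      have := h0 f hf
      rwa [eval_zero] at this
    | succ k ih =>
      intro m hm f hf
      have : m ≠ 0 := by rintro rfl; simp at hm
      obtain ⟨a, ha⟩ := Finsupp.ne_iff.1 this
      have ha : m a ≠ 0 := ha
      have hle : Finsupp.single a 1 ≤ m := by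
        rw [Finsupp.single_le_iff]; omega
      obtain ⟨m', rfl⟩ : ∃ m', m = m' + Finsupp.single a 1 := ⟨m - Finsupp.single a 1, (tsub_add_cancel_of_le hle).symm⟩
      have h1 : m'.degree = k := by
        rw [map_add] at hm
        simp at hm
        omega
      have h2 := ih m' h1 _ (hd f hf a)
      rw [coeff_pderiv] at h2
      rcases mul_eq_zero.1 h2 with h | h
      · exact h
      · exact absurd h (Nat.cast_add_one_ne_zero _)
  intro f hf
  ext m
  simpa using key _ m rfl f hf

lemma sums_sub_secant {N : ℕ} {Y : Set (Fin N → ℂ)} (j : ℕ) : ∀ p : Fin (j+1) → Fin N → ℂ,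
    (∀ i, p i ∈ Y) → ∑ i, p i ∈ secant j Y := by
  induction j with
  | zero =>
    intro p hp
    simp only [secant, zcl]
    rintro T ⟨hT, hYT⟩
    simpa using hYT (hp 0)
  | succ j ih =>
    intro p hp
    rw [Fin.sum_univ_castSucc]
    simp only [secant, joinSet, zcl]
    rintro T ⟨hT, hYT⟩
    exact hYT ⟨_, ih (fun i => p i.castSucc) (fun i => hp _), _, hp _, rfl⟩

lemma F_exists {N : ℕ} {Y : Set (Fin N → ℂ)} (hc : IsCone Y) (j : ℕ) (hj : secant j Y ≠ Set.univ) :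
    ∃ F : MvPolynomial (Fin N) ℂ,
      (∀ p : Fin (j+1) → Fin N → ℂ, (∀ i, p i ∈ Y) → eval (∑ i, p i) F = 0) ∧
      ∃ p : Fin (j+1) → Fin N → ℂ, (∀ i, p i ∈ Y) ∧ dL (∑ i, p i) F ≠ 0 := by
  obtain ⟨x, hx⟩ := (Set.ne_univ_iff_exists_notMem _).1 hj
  have hz : ∃ S, secant j Y = zcl S := by
    cases j with
    | zero => exact ⟨_, rfl⟩
    | succ j => exact ⟨_, rfl⟩
  obtain ⟨S, hS⟩ := hz
  rw [hS, zcl_eq, mem_zl] at hx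
  push Not at hx
  obtain ⟨f, hf, hfx⟩ := hx
  have hf1 : ∀ y ∈ secant j Y, eval y f = 0 := by
    rw [hS, zcl_eq]
    exact fun y hy => mem_zl.1 hy f hf
  by_contra hcon
  push Not at hcon
  let I : Set (MvPolynomial (Fin N) ℂ) :=
    {F | ∀ p : Fin (j+1) → Fin N → ℂ, (∀ i, p i ∈ Y) → eval (∑ i, p i) F = 0}
  have := zero_of_pderiv_closed I (fun F hF => by
    have := hF (fun _ => 0) (fun _ => hc.1)
    simpa using this) (fun F hF a p hp => by
    have := hcon F hF p hp
    have := LinearMap.congr_fun this (Pi.single a 1)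
    rw [dL_apply] at this
    simpa [Pi.single_apply] using this) f (fun p hp => hf1 _ (sums_sub_secant j p hp))
  rw [this] at hfx
  simp at hfx

lemma F_kill {N j : ℕ} {Y : Set (Fin N → ℂ)} {F : MvPolynomial (Fin N) ℂ}
    (hF : ∀ p : Fin j → Fin N → ℂ, (∀ i, p i ∈ Y) → eval (∑ i, p i) F = 0)
    (p : Fin j → Fin N → ℂ) (hp : ∀ i, p i ∈ Y) (i : Fin j) {v : Fin N → ℂ} (hv : v ∈ tanSpan Y (p i)) :
    dL (∑ i, p i) F v = 0 := by
  let c : Fin N → ℂ := ∑ k ∈ Finset.univ.erase i, p k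
  have hsum : ∑ k, p k = p i + c := (Finset.add_sum_erase _ _ (Finset.mem_univ i)).symm
  let f : MvPolynomial (Fin N) ℂ := aeval (fun a => X a + C (c a)) F
  have hev : ∀ (G : MvPolynomial (Fin N) ℂ) y,
      eval y (aeval (fun a => X a + C (c a)) G : MvPolynomial (Fin N) ℂ) = eval (y + c) G := by
    intro G y
    rw [eval_aev]
    congr 2
    ext a; simp
  have hf : f ∈ vI Y := mem_vI.2 fun y hy => by
    rw [hev]
    have := hF (Function.update p i y) (fun k => by
      by_cases h : k = i
      · subst h; simpa using hy
      · simpa [h] using hp k)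
    rw [← Finset.add_sum_erase _ _ (Finset.mem_univ i)] at this
    rw [Function.update_self] at this
    have he : c = ∑ k ∈ Finset.univ.erase i, Function.update p i y k := by
      refine (Finset.sum_congr rfl fun k hk => ?_).symm
      rw [Function.update_of_ne (Finset.ne_of_mem_erase hk)]
    rw [he]; exact this
  have h1 := mem_tan.1 hv f hf
  rw [dL_apply] at h1 ⊢
  rw [← h1, hsum]
  refine Finset.sum_congr rfl fun b _ => ?_
  congr 1
  simp only [f]
  rw [chain_rule, Finset.sum_eq_single b]
  · rw [smul_eq_mul, map_mul, hev]; simp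
  · intro k _ hk; simp [hk.symm]
  · simp

/-- the polynomial `dF(sum of the last points)(first point)` -/
def hpol {N : ℕ} (j : ℕ) (F : MvPolynomial (Fin N) ℂ) : MvPolynomial (Fin (j+1) × Fin N) ℂ :=
  ∑ a, X (0, a) * aeval (fun b => ∑ i : Fin j, X (i.succ, b)) (pderiv a F)

lemma ev_sum {N m : ℕ} (s : Finset (Fin m)) (p : Fin m → Fin N → ℂ) (G : MvPolynomial (Fin N) ℂ) :
    evT p (aeval (fun b => ∑ i ∈ s, X (i, b)) G) = eval (∑ i ∈ s, p i) G := by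
  rw [evT, eval_aev]
  congr 2
  ext a; simp

lemma ev_hpol {N j : ℕ} (F : MvPolynomial (Fin N) ℂ) (p : Fin (j+1) → Fin N → ℂ) :
    evT p (hpol j F) = dL (∑ i : Fin j, p i.succ) F (p 0) := by
  have : ∀ G : MvPolynomial (Fin N) ℂ, evT p (aeval (fun b => ∑ i : Fin j, X (i.succ, b)) G) =
      eval (∑ i : Fin j, p i.succ) G := by
    intro G
    rw [evT, eval_aev]
    congr 2
    ext a; simp
  rw [dL_apply]
  simp only [hpol, evT, map_sum, map_mul, eval_X] at this ⊢
  exact Finset.sum_congr rfl fun a _ => by rw [this]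

lemma gen_h {N n : ℕ} {Y : Set (Fin N → ℂ)} (hY : Setup N n Y) {j : ℕ} {F : MvPolynomial (Fin N) ℂ}
    {p : Fin j → Fin N → ℂ} (hp : ∀ i, p i ∈ Y) (h : dL (∑ i, p i) F ≠ 0) :
    GenP (j+1) Y (fun p => dL (∑ i : Fin j, p i.succ) F (p 0) ≠ 0) := by
  have : ∃ x ∈ Y, dL (∑ i, p i) F x ≠ 0 := by
    by_contra hcon
    push Not at hcon
    apply h
    rw [← LinearMap.ker_eq_top, eq_top_iff, ← hY.nd, Submodule.span_le]
    exact fun x hx => hcon x hx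
  obtain ⟨x, hx, hxF⟩ := this
  refine ⟨hpol j F, ⟨Fin.cons x p, fun i => ?_, ?_⟩, fun q hq hg => by rwa [ev_hpol] at hg⟩
  · refine Fin.cases ?_ (fun i => ?_) i
    · simpa using hx
    · simpa using hp i
  · rw [ev_hpol]; simpa using hxF


lemma const_ratio {N : ℕ} {T : Set (Fin N → ℂ)} (hT : IrrAlg T) (f h g : MvPolynomial (Fin N) ℂ)
    (hh : h ∉ vI T) (hg : g ∉ vI T)
    (H : ∀ x ∈ T, eval x g ≠ 0 → ∀ v ∈ tanSpan T x, dL x f v * eval x h = eval x f * dL x h v) :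
    ∃ c : ℂ, ∀ x ∈ T, eval x f = c * eval x h := by
  have hp := vI_prime hT
  let A := MvPolynomial (Fin N) ℂ ⧸ vI T
  let K := FractionRing A
  let π : MvPolynomial (Fin N) ℂ →ₐ[ℂ] K := (IsScalarTower.toAlgHom ℂ A K).comp (Ideal.Quotient.mkₐ ℂ (vI T))
  have hπ : ∀ F, π F = 0 ↔ F ∈ vI T := by
    intro F
    change algebraMap A K (Ideal.Quotient.mk (vI T) F) = 0 ↔ _
    rw [FaithfulSMul.algebraMap_eq_zero_iff, Ideal.Quotient.eq_zero_iff_mem]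
  have hh0 : π h ≠ 0 := fun e => hh ((hπ h).1 e)
  have hD : ∀ D : Derivation ℂ K K, D (π f / π h) = 0 := by
    intro D
    have hDF : ∀ F, D (π F) = ∑ a, π (pderiv a F) * D (π (X a)) := by
      intro F
      have e : ∀ G, π G = aeval (fun a => π (X a)) G := fun G => by
        exact AlgHom.congr_fun (MvPolynomial.aeval_unique π) G
      rw [e F, chain_rule]
      simp only [← e, smul_eq_mul]
    obtain ⟨w, hw⟩ := IsLocalization.exist_integer_multiples_of_finite (nonZeroDivisors A) (fun a => D (π (X a)))
    choose u hu using hw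
    obtain ⟨w', hw'⟩ := Ideal.Quotient.mk_surjective (w : A)
    have hUe : ∀ a, ∃ U : MvPolynomial (Fin N) ℂ, Ideal.Quotient.mk (vI T) U = u a :=
      fun a => Ideal.Quotient.mk_surjective (u a)
    choose U hU using hUe
    have hUw : ∀ a, π (U a) = π w' * D (π (X a)) := by
      intro a
      have h1 := hu a
      rw [← hU a] at h1
      change π (U a) = _ at h1
      rw [h1, Algebra.smul_def, ← hw']
      rfl
    have hw0 : π w' ≠ 0 := by
      change algebraMap A K (Ideal.Quotient.mk (vI T) w') ≠ 0
      rw [hw', Ne, FaithfulSMul.algebraMap_eq_zero_iff]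
      exact nonZeroDivisors.ne_zero w.2
    have hsum : ∀ F, π (∑ a, U a * pderiv a F) = π w' * D (π F) := by
      intro F
      rw [hDF, map_sum, Finset.mul_sum]
      exact Finset.sum_congr rfl fun a _ => by rw [map_mul, hUw]; ring
    have htan : ∀ x ∈ T, (fun a => eval x (U a)) ∈ tanSpan T x := by
      intro x hx
      rw [mem_tan]
      intro F hF
      have : (∑ a, U a * pderiv a F) ∈ vI T := by
        rw [← hπ, hsum, (hπ F).2 hF, map_zero, mul_zero]
      rw [dL_apply]
      simpa using mem_vI.1 this x hx
    have hmem : ((∑ a, U a * pderiv a f) * h - f * (∑ a, U a * pderiv a h)) * g ∈ vI T := by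
      rw [mem_vI]
      intro x hx
      by_cases hgx : eval x g = 0
      · simp [hgx]
      · have := H x hx hgx _ (htan x hx)
        rw [dL_apply, dL_apply] at this
        simp only [map_mul, map_sub, map_sum]
        rw [this, sub_self, zero_mul]
    have h2 := (hp.mem_or_mem hmem).resolve_right hg
    rw [← hπ, map_sub, map_mul, map_mul, hsum, hsum] at h2
    have h3 : D (π f) * π h - π f * D (π h) = 0 := by
      have h4 : π w' * (D (π f) * π h - π f * D (π h)) = 0 := by rw [← h2]; ring
      exact (mul_eq_zero.1 h4).resolve_left hw0
    rw [Derivation.leibniz_div]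
    simp only [smul_eq_mul]
    have : π h * D (π f) - π f * D (π h) = 0 := by rw [← h3]; ring
    rw [this]; simp
  obtain ⟨c, hc⟩ := const_of_der _ hD
  refine ⟨c, fun x hx => ?_⟩
  have h1 : π (f - C c * h) = 0 := by
    rw [map_sub, map_mul]
    have : π (C c) = algebraMap ℂ K c := by
      rw [← algebraMap_eq, AlgHom.commutes]
    rw [this, hc, div_mul_cancel₀ _ hh0, sub_self]
  have := mem_vI.1 ((hπ _).1 h1) x hx
  simpa [sub_eq_zero] using this

def lpoly {N : ℕ} (φ : Module.Dual ℂ (Fin N → ℂ)) : MvPolynomial (Fin N) ℂ :=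
  ∑ a, C (φ (Pi.single a 1)) * X a

lemma dual_sum {N : ℕ} (φ : Module.Dual ℂ (Fin N → ℂ)) (x : Fin N → ℂ) :
    φ x = ∑ a, φ (Pi.single a 1) * x a := by
  conv_lhs => rw [← (Pi.basisFun ℂ (Fin N)).sum_repr x]
  simp [mul_comm]

lemma eval_lpoly {N : ℕ} (φ : Module.Dual ℂ (Fin N → ℂ)) (x : Fin N → ℂ) : eval x (lpoly φ) = φ x := by
  rw [dual_sum]; simp [lpoly]

lemma dL_lpoly {N : ℕ} (φ : Module.Dual ℂ (Fin N → ℂ)) (x : Fin N → ℂ) : dL x (lpoly φ) = φ := by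
  ext a
  have : ∀ F, dL x (lpoly φ) F = φ F := by
    intro F
    rw [dL_apply, dual_sum φ]
    refine Finset.sum_congr rfl fun i _ => ?_
    have e : pderiv i (lpoly φ) = C (φ (Pi.single i 1)) := by
      rw [lpoly, map_sum, Finset.sum_eq_single i]
      · rw [pderiv_C_mul, pderiv_X_self, mul_one]
      · intro b _ hb
        rw [pderiv_C_mul, pderiv_X_of_ne hb, mul_zero]
      · simp
    rw [e, eval_C, mul_comm]
  exact this _

lemma mem_of_dual {N : ℕ} (L : Submodule ℂ (Fin N → ℂ)) (x : Fin N → ℂ)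
    (h : ∀ φ : Module.Dual ℂ (Fin N → ℂ), (∀ v ∈ L, φ v = 0) → φ x = 0) : x ∈ L := by
  by_contra hx
  obtain ⟨φ, h1, h2⟩ := Submodule.exists_le_ker_of_notMem hx
  exact h1 (h φ fun v hv => h2 hv)

lemma finrank_sup_single {N : ℕ} (L : Submodule ℂ (Fin N → ℂ)) (x : Fin N → ℂ) (hx : x ∉ L) :
    Module.finrank ℂ (L ⊔ Submodule.span ℂ {x} : Submodule ℂ (Fin N → ℂ)) = Module.finrank ℂ L + 1 := by
  have h0 : x ≠ 0 := by rintro rfl; exact hx L.zero_mem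
  have h1 := Submodule.finrank_sup_add_finrank_inf_eq L (Submodule.span ℂ {x})
  have h2 : L ⊓ Submodule.span ℂ {x} = ⊥ := by
    rw [← disjoint_iff]
    exact (Submodule.disjoint_span_singleton' h0).2 hx
  rw [h2, finrank_bot, finrank_span_singleton h0] at h1
  omega

lemma psi_pt {N n j : ℕ} {Y : Set (Fin N → ℂ)} (hY : Setup N n Y) (p : Fin (j+1) → Fin N → ℂ)
    (hp : ∀ i, p i ∈ Y ∧ p i ≠ 0)
    (hmax : ∀ q : Fin (j+1) → Fin N → ℂ, (∀ i, q i ∈ Y ∧ q i ≠ 0) →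
      Module.finrank ℂ (⨆ i, tanSpan Y (q i) : Submodule ℂ (Fin N → ℂ)) ≤
      Module.finrank ℂ (⨆ i, tanSpan Y (p i) : Submodule ℂ (Fin N → ℂ)))
    (h : Module.Dual ℂ (Fin N → ℂ)) (hL : ∀ i : Fin j, ∀ v ∈ tanSpan Y (p i.succ), h v = 0)
    (hp0 : h (p 0) ≠ 0) :
    pdim (PsiLocus Y p) = nn (Module.finrank ℂ
      (tanSpan Y (p 0) ⊓ ⨆ i : Fin j, tanSpan Y (p i.succ) : Submodule ℂ (Fin N → ℂ))) := by
  set L : Submodule ℂ (Fin N → ℂ) := ⨆ i : Fin j, tanSpan Y (p i.succ) with hLdef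
  set W := tanSpan Y (p 0) with hWdef
  set ψ := Module.finrank ℂ (W ⊓ L : Submodule ℂ (Fin N → ℂ)) with hψ
  have hhL : ∀ v ∈ L, h v = 0 := by
    have : L ≤ LinearMap.ker h := iSup_le fun i v hv => hL i v hv
    exact fun v hv => this hv
  let Λ : Submodule ℂ (Fin N → ℂ) := L ⊔ Submodule.span ℂ {p 0}
  have hΛ : Submodule.span ℂ ((⋃ i : Fin j, embTangent Y (p i.succ)) ∪ {p 0}) = Λ := by
    rw [Submodule.span_union, Submodule.span_iUnion]
    rfl
  have hW : Module.finrank ℂ W = n + 1 := hY.sm _ (hp 0).1 (hp 0).2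
  have hpW : p 0 ∈ W := tan_self hY.cone (hp 0).1
  have hpL : p 0 ∉ L := fun h' => hp0 (hhL _ h')
  have hpΛ : p 0 ∈ Λ := Submodule.mem_sup_right (Submodule.mem_span_singleton_self _)
  have hLΛ : L ≤ Λ := le_sup_left
  have hpΛs : ∀ x, x ∈ Λ → Submodule.span ℂ {x} ≤ Λ := fun x hx => by
    rw [Submodule.span_singleton_le_iff_mem]; exact hx
  have hmod : ∀ (x : Fin N → ℂ), x ∈ Y → x ≠ 0 → h x ≠ 0 →
      Module.finrank ℂ ((tanSpan Y x ⊓ L) ⊔ Submodule.span ℂ {x} : Submodule ℂ (Fin N → ℂ)) =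
      Module.finrank ℂ (tanSpan Y x ⊓ L : Submodule ℂ (Fin N → ℂ)) + 1 := by
    intro x hx hx0 hhx
    exact finrank_sup_single _ _ fun h' => hhx (hhL _ h'.2)
  have hWΛ : W ⊓ Λ = (W ⊓ L) ⊔ Submodule.span ℂ {p 0} := by
    have : Submodule.span ℂ {p 0} ≤ W := by rw [Submodule.span_singleton_le_iff_mem]; exact hpW
    rw [inf_comm W Λ, inf_comm W L]
    change (L ⊔ _) ⊓ W = _
    rw [sup_comm, sup_inf_assoc_of_le _ this, sup_comm]
  have hWΛr : Module.finrank ℂ (W ⊓ Λ : Submodule ℂ (Fin N → ℂ)) = ψ + 1 := by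
    rw [hWΛ, hmod _ (hp 0).1 (hp 0).2 hp0]
  have hψx : ∀ x, x ∈ Y → x ≠ 0 → ψ ≤ Module.finrank ℂ (tanSpan Y x ⊓ L : Submodule ℂ (Fin N → ℂ)) := by
    intro x hx hx0
    have h1 := hmax (Fin.cons x fun i => p i.succ) (fun i => by
      refine Fin.cases ?_ (fun i => ?_) i
      · exact ⟨hx, hx0⟩
      · exact hp _)
    have e : ∀ q : Fin (j+1) → Fin N → ℂ, ⨆ i, tanSpan Y (q i) =
        tanSpan Y (q 0) ⊔ ⨆ i : Fin j, tanSpan Y (q i.succ) := by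
      intro q
      apply le_antisymm
      · refine iSup_le fun i => ?_
        refine Fin.cases le_sup_left (fun i => ?_) i
        exact le_sup_of_le_right (le_iSup (fun i : Fin j => tanSpan Y (q i.succ)) i)
      · exact sup_le (le_iSup (fun i => tanSpan Y (q i)) 0)
          (iSup_le fun i => le_iSup (fun i => tanSpan Y (q i)) i.succ)
    rw [e, e] at h1
    have h1' : Module.finrank ℂ (tanSpan Y x ⊔ L : Submodule ℂ (Fin N → ℂ)) ≤ Module.finrank ℂ (W ⊔ L : Submodule ℂ (Fin N → ℂ)) := h1
    have h2 := Submodule.finrank_sup_add_finrank_inf_eq (tanSpan Y x) L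
    have h3 := Submodule.finrank_sup_add_finrank_inf_eq W L
    rw [hY.sm x hx hx0] at h2
    rw [hW] at h3
    omega
  have hAlgΛ : IsAlg (Λ : Set (Fin N → ℂ)) := by
    refine ⟨{f | ∃ φ : Module.Dual ℂ (Fin N → ℂ), (∀ v ∈ Λ, φ v = 0) ∧ f = lpoly φ}, ?_⟩
    ext x
    constructor
    · rintro hx _ ⟨φ, hφ, rfl⟩
      rw [eval_lpoly]; exact hφ x hx
    · intro hx
      exact mem_of_dual _ _ fun φ hφ => by
        rw [← eval_lpoly]; exact hx _ ⟨φ, hφ, rfl⟩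
  have hAlg : IsAlg (Y ∩ (Λ : Set (Fin N → ℂ))) := isAlg_inter hY.irr.1 hAlgΛ
  rw [PsiLocus, hΛ]
  have htanle : ∀ (T : Set (Fin N → ℂ)) (Λ₁ : Submodule ℂ (Fin N → ℂ)) (x : Fin N → ℂ), T ⊆ Y →
      (∀ y ∈ T, y ∈ Λ₁) → tanSpan T x ≤ tanSpan Y x ⊓ Λ₁ := by
    intro T Λ₁ x hTY hTΛ v hv
    rw [mem_tan] at hv
    refine ⟨mem_tan.2 fun f hf => hv f (mem_vI.2 fun y hy => mem_vI.1 hf y (hTY hy)), ?_⟩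
    refine mem_of_dual _ _ fun φ hφ => ?_
    rw [← dL_lpoly φ x]
    exact hv _ (mem_vI.2 fun y hy => by rw [eval_lpoly]; exact hφ _ (hTΛ y hy))
  apply le_antisymm
  · apply pdim_le
    intro T hT hTc hT0 hTs
    obtain ⟨T', hT', hpT', hTT'⟩ := irr_sub_compThrough hAlg hT hTs
    calc dimA T ≤ dimA T' := dimA_mono hT hT'.1 hTT'
      _ ≤ Module.finrank ℂ (tanSpan T' (p 0)) := dimA_le_tan hT'.1 hpT'
      _ ≤ Module.finrank ℂ (W ⊓ Λ : Submodule ℂ (Fin N → ℂ)) :=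
        Submodule.finrank_mono (htanle T' Λ (p 0) (fun y hy => (hT'.2.1 hy).1) fun y hy => (hT'.2.1 hy).2)
      _ = ψ + 1 := hWΛr
  -- lower bound
  obtain ⟨M, hM⟩ := exists_isCompl (Λ ⊔ W)
  let Λ' := Λ ⊔ M
  have hΛ'W : Λ' ⊔ W = ⊤ := by
    rw [← hM.sup_eq_top]
    change Λ ⊔ M ⊔ W = Λ ⊔ W ⊔ M
    exact sup_right_comm Λ M W
  have hΛ'r : Module.finrank ℂ Λ' + (n + 1) = N + (ψ + 1) := by
    have h1 := Submodule.finrank_add_eq_of_isCompl hM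
    have h2 := Submodule.finrank_sup_add_finrank_inf_eq Λ W
    have h3 := Submodule.finrank_sup_add_finrank_inf_eq Λ M
    have h4 : Λ ⊓ M = ⊥ := by
      rw [← disjoint_iff]; exact hM.disjoint.mono_left le_sup_left
    rw [h4, finrank_bot] at h3
    rw [inf_comm, hWΛr, hW] at h2
    rw [Module.finrank_fintype_fun_eq_card, Fintype.card_fin] at h1
    change Module.finrank ℂ (Λ ⊔ M : Submodule ℂ (Fin N → ℂ)) + _ = _
    omega
  let b := Module.finBasis ℂ Λ'.dualAnnihilator
  have hb := Subspace.finrank_add_finrank_dualAnnihilator_eq Λ'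
  rw [Module.finrank_fintype_fun_eq_card, Fintype.card_fin] at hb
  let s : Finset (MvPolynomial (Fin N) ℂ) := Finset.univ.image fun i => lpoly (b i : Module.Dual ℂ (Fin N → ℂ))
  have hscard : s.card ≤ Module.finrank ℂ Λ'.dualAnnihilator := by
    refine Finset.card_image_le.trans ?_
    simp
  have hsz : ∀ y, (∀ f ∈ s, eval y f = 0) ↔ y ∈ Λ' := by
    intro y
    constructor
    · intro hy
      apply mem_of_dual
      intro φ hφ
      have hφ' : φ ∈ Λ'.dualAnnihilator := (Submodule.mem_dualAnnihilator _).2 hφ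
      have h1 := b.sum_repr ⟨φ, hφ'⟩
      have h2 := congrArg (fun z : Λ'.dualAnnihilator => (z : Module.Dual ℂ (Fin N → ℂ)) y) h1
      simp only [Submodule.coe_sum, Submodule.coe_smul, LinearMap.sum_apply, LinearMap.smul_apply] at h2
      rw [← h2]
      refine Finset.sum_eq_zero fun i _ => ?_
      have := hy _ (Finset.mem_image_of_mem _ (Finset.mem_univ i))
      rw [eval_lpoly] at this
      rw [this, smul_zero]
    · intro hy f hf
      obtain ⟨i, _, rfl⟩ := Finset.mem_image.1 hf
      rw [eval_lpoly]
      exact (Submodule.mem_dualAnnihilator _).1 (b i).2 y hy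
  have hpΛ' : p 0 ∈ Λ' := Submodule.mem_sup_left hpΛ
  obtain ⟨T, hT, hTc, hTY, hTs, hpT, hTd⟩ := cone_cut hY.irr hY.cone (p 0) (hp 0).1 s
    ((hsz _).2 hpΛ') ⟨(hsz _).2 (zero_mem _), fun c x hx => (hsz _).2 (Λ'.smul_mem c ((hsz x).1 hx))⟩
  have hTΛ' : ∀ x ∈ T, x ∈ Λ' := fun x hx => (hsz x).1 fun f hf => hTs f hf x hx
  have hTdim : ψ + 1 ≤ dimA T := by
    have := hY.dim
    omega
  obtain ⟨g, hg1, hg2⟩ := semicont hY Λ' (fun _ : Fin 1 => p 0) (fun _ => hp 0)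
  let g₄ : MvPolynomial (Fin N) ℂ := rename Prod.snd g
  have hg₄ : ∀ x, eval x g₄ = evT (fun _ : Fin 1 => x) g := by
    intro x; rw [eval_rename]; rfl
  have hTL : ∀ x ∈ T, x ∈ Λ := by
    have hcr : ∀ f : Module.Dual ℂ (Fin N → ℂ), (∀ v ∈ L, f v = 0) → ∃ c : ℂ, ∀ x ∈ T, f x = c * h x := by
      intro f hf
      obtain ⟨c, hc⟩ := const_ratio hT (lpoly f) (lpoly h) (lpoly h * g₄)
        (fun h' => hp0 (by rw [← eval_lpoly]; exact mem_vI.1 h' _ hpT))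
        (fun h' => by
          have := mem_vI.1 h' _ hpT
          rw [map_mul, eval_lpoly, hg₄] at this
          exact mul_ne_zero hp0 hg1 this) (by
        intro x hx hgx v hv
        rw [map_mul, eval_lpoly, hg₄] at hgx
        have hhx := left_ne_zero_of_mul hgx
        have hx0 : x ≠ 0 := by rintro rfl; simp at hhx
        have hr := hg2 (fun _ => x) (fun _ => hTY hx) (right_ne_zero_of_mul hgx)
        rw [iSup_const, iSup_const, ← hWdef, hΛ'W, finrank_top] at hr
        have htop : Λ' ⊔ tanSpan Y x = ⊤ := by
          apply Submodule.eq_top_of_finrank_eq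
          exact le_antisymm (Submodule.finrank_le _) hr
        have h5 := Submodule.finrank_sup_add_finrank_inf_eq Λ' (tanSpan Y x)
        rw [htop, finrank_top, Module.finrank_fintype_fun_eq_card, Fintype.card_fin,
          hY.sm x (hTY hx) hx0] at h5
        have h6 := hmod x (hTY hx) hx0 hhx
        have h7 := hψx x (hTY hx) hx0
        have h8 : (tanSpan Y x ⊓ L) ⊔ Submodule.span ℂ {x} = Λ' ⊓ tanSpan Y x := by
          apply Submodule.eq_of_le_of_finrank_le
          · refine sup_le ?_ ?_
            · rw [inf_comm]
              exact inf_le_inf_right _ (hLΛ.trans le_sup_left)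
            · rw [Submodule.span_singleton_le_iff_mem]
              exact ⟨hTΛ' x hx, tan_self hY.cone (hTY hx)⟩
          · omega
        have h9 := htanle T Λ' x hTY hTΛ' hv
        rw [inf_comm, ← h8] at h9
        obtain ⟨l, hl, y, hy, rfl⟩ := Submodule.mem_sup.1 h9
        obtain ⟨c, rfl⟩ := Submodule.mem_span_singleton.1 hy
        rw [dL_lpoly, dL_lpoly, eval_lpoly, eval_lpoly, map_add, map_add, hf l hl.2, hhL l hl.2,
          map_smul, map_smul]
        simp only [smul_eq_mul]
        ring)
      exact ⟨c, fun x hx => by simpa only [eval_lpoly] using hc x hx⟩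
    intro x hx
    have : x - (h x / h (p 0)) • p 0 ∈ L := by
      apply mem_of_dual
      intro f hf
      obtain ⟨c, hc⟩ := hcr f hf
      rw [map_sub, map_smul, hc x hx, hc _ hpT, smul_eq_mul]
      field_simp
      ring
    have h2 := Submodule.add_mem _ (hLΛ this) (Λ.smul_mem (h x / h (p 0)) hpΛ)
    simpa using h2
  exact pdim_ge _ _ T hT hTc (sub_compThrough hAlg hT (fun x hx => ⟨hTY hx, hTL x hx⟩) hpT) hTdim


lemma aeval_memO {K : Type} [Field K] [Algebra ℂ K] (O : ValuationSubring K)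
    (hO : ∀ c : ℂ, algebraMap ℂ K c ∈ O) {N : ℕ} (y : Fin N → K) (hy : ∀ a, y a ∈ O)
    (f : MvPolynomial (Fin N) ℂ) : aeval y f ∈ O := by
  induction f using MvPolynomial.induction_on with
  | C c => rw [algHom_C]; exact hO c
  | add p q hp hq => rw [map_add]; exact add_mem hp hq
  | mul_X p j hp => rw [map_mul, aeval_X]; exact mul_mem hp (hy j)

lemma taylorK {K : Type} [Field K] [Algebra ℂ K] (O : ValuationSubring K)
    (hO : ∀ c : ℂ, algebraMap ℂ K c ∈ O) {N : ℕ} (y z : Fin N → K) (hy : ∀ a, y a ∈ O)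
    (hz : ∀ a, z a ∈ O) (t : K) (ht : t ∈ O)
    (f : MvPolynomial (Fin N) ℂ) : ∃ e ∈ O, aeval (fun a => y a + t * z a) f =
      aeval y f + t * (∑ a, aeval y (pderiv a f) * z a) + t ^ 2 * e := by
  induction f using MvPolynomial.induction_on with
  | C c => exact ⟨0, O.zero_mem, by simp [algHom_C]⟩
  | add p q hp hq =>
    obtain ⟨e, he, h⟩ := hp
    obtain ⟨e', he', h'⟩ := hq
    refine ⟨e + e', add_mem he he', ?_⟩
    simp only [map_add, h, h', add_mul, Finset.sum_add_distrib]
    ring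
  | mul_X p j hp =>
    obtain ⟨e, he, h⟩ := hp
    have hB : (∑ a, aeval y (pderiv a p) * z a) ∈ O :=
      sum_mem fun a _ => mul_mem (aeval_memO O hO y hy _) (hz a)
    refine ⟨(∑ a, aeval y (pderiv a p) * z a) * z j + e * (y j + t * z j),
      add_mem (mul_mem hB (hz j)) (mul_mem he (add_mem (hy j) (mul_mem ht (hz j)))), ?_⟩
    have e2 : ∑ a, aeval y (pderiv a (p * X j)) * z a =
        (∑ a, aeval y (pderiv a p) * z a) * y j + aeval y p * z j := by
      have : ∀ a, aeval y (pderiv a (p * X j)) * z a =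
          aeval y (pderiv a p) * z a * y j + (if a = j then aeval y p * z a else 0) := by
        intro a
        rw [Derivation.leibniz, pderiv_X]
        by_cases hj : a = j
        · subst hj; simp; ring
        · have hj' : j ≠ a := fun e => hj e.symm
          simp [hj, hj']; ring
      simp only [this, Finset.sum_add_distrib, ← Finset.sum_mul]
      simp
    rw [e2, map_mul, map_mul, h, aeval_X, aeval_X]
    ring

lemma val_core {N n : ℕ} {Y : Set (Fin N → ℂ)} (hY : Setup N n Y) {K : Type} [Field K] [Algebra ℂ K]
    (O : ValuationSubring K) (hO : ∀ c : ℂ, algebraMap ℂ K c ∈ O) (P Z h : Fin N → K)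
    (hZ : ∀ a, Z a ∈ O) (hh : ∀ a, h a ∈ O) (hhZ : (∑ a, h a * Z a) ≠ 0) (hhZ' : (∑ a, h a * Z a)⁻¹ ∈ O)
    (hP : ∃ a, P a ∉ O)
    (h1 : ∀ f ∈ vI Y, ∀ l : K, aeval (fun a => l * P a) f = 0)
    (h2 : ∀ f ∈ vI Y, ∀ l : K, aeval (fun a => l * (Z a - P a)) f = 0)
    (h3 : ∀ s : Fin N → MvPolynomial (Fin N) ℂ, TanSec Y s → ∀ l : K,
      ∑ a, h a * aeval (fun a => l * P a) (s a) = 0) : False := by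
  obtain ⟨a₀, ha₀⟩ := hP
  have : Nonempty (Fin N) := ⟨a₀⟩
  obtain ⟨a, ha⟩ := Finite.exists_max (fun a => O.valuation (P a))
  have hPa : 1 < O.valuation (P a) := by
    refine lt_of_lt_of_le ?_ (ha a₀)
    rw [← not_le, ValuationSubring.valuation_le_one_iff]
    exact ha₀
  have hPa0 : P a ≠ 0 := by rintro e; rw [e, map_zero] at hPa; exact not_lt_zero hPa
  let t : K := (P a)⁻¹
  have ht : O.valuation t < 1 := by
    rw [map_inv₀]; exact inv_lt_one_of_one_lt₀ hPa
  have htO : t ∈ O := (ValuationSubring.valuation_le_one_iff _ _).1 ht.le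
  let y : Fin N → K := fun b => -t * P b
  have hy : ∀ b, y b ∈ O := by
    intro b
    rw [← ValuationSubring.valuation_le_one_iff]
    change O.valuation (-t * P b) ≤ 1
    rw [map_mul, Valuation.map_neg, map_inv₀]
    exact inv_mul_le_one_of_le₀ (ha b) zero_le
  have hya : y a = -1 := by
    change -(P a)⁻¹ * P a = -1
    rw [neg_mul, inv_mul_cancel₀ hPa0]
  have hy0 : ∀ f ∈ vI Y, aeval y f = 0 := fun f hf => h1 f hf (-t)
  have hdf : ∀ f ∈ vI Y, O.valuation (∑ b, aeval y (pderiv b f) * Z b) < 1 := by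
    intro f hf
    obtain ⟨e, he, h⟩ := taylorK O hO y Z hy hZ t htO f
    have h5 : (fun b => y b + t * Z b) = fun b => t * (Z b - P b) := by
      ext b; simp only [y]; ring
    rw [h5, h2 f hf, hy0 f hf, zero_add] at h
    have ht0 : t ≠ 0 := inv_ne_zero hPa0
    have h6 : (∑ b, aeval y (pderiv b f) * Z b) = - (t * e) := by
      have : t * ((∑ b, aeval y (pderiv b f) * Z b) + t * e) = 0 := by rw [h]; ring
      have := (mul_eq_zero.1 this).resolve_left ht0
      linear_combination this
    rw [h6, Valuation.map_neg, map_mul]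
    exact mul_lt_one_of_lt_of_le ht ((ValuationSubring.valuation_le_one_iff _ _).2 he)
  let S : Set (MvPolynomial (Fin N) ℂ) := {g | ∃ ρ : ℕ, ∃ f : Fin ρ → MvPolynomial (Fin N) ℂ,
      ∃ M : Fin N → Fin ρ → MvPolynomial (Fin N) ℂ, (∀ i, f i ∈ vI Y) ∧
      ∀ b, TanSec Y (fun a => (if a = b then g else 0) - ∑ i, M a i * pderiv b (f i))}
  have hSg : ∃ g ∈ S, O.valuation (aeval y g) = 1 := by
    by_contra hcon
    push Not at hcon
    let J : Ideal (MvPolynomial (Fin N) ℂ) := vI Y ⊔ Ideal.span S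
    let I : Ideal (MvPolynomial (Fin N) ℂ) :=
      { carrier := {p | O.valuation (aeval y p) < 1}
        add_mem' := by
          intro p q hp hq
          change O.valuation (aeval y (p+q)) < 1
          rw [map_add]
          exact Valuation.map_add_lt _ hp hq
        zero_mem' := by
          change O.valuation (aeval y 0) < 1
          simp
        smul_mem' := by
          intro c p hp
          change O.valuation (aeval y (c * p)) < 1
          rw [map_mul, map_mul, mul_comm]
          exact mul_lt_one_of_lt_of_le hp
            ((ValuationSubring.valuation_le_one_iff _ _).2 (aeval_memO O hO y hy c)) }
    have hJI : J ≤ I := by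
      refine sup_le ?_ (Ideal.span_le.2 ?_)
      · intro f hf
        change O.valuation (aeval y f) < 1
        rw [hy0 f hf]; simp
      · intro g hg
        exact lt_of_le_of_ne ((ValuationSubring.valuation_le_one_iff _ _).2 (aeval_memO O hO y hy g))
          (hcon g hg)
    have hXr : (X a : MvPolynomial (Fin N) ℂ) ∈ J.radical := by
      rw [← vanishingIdeal_zeroLocus_eq_radical (K := ℂ)]
      rw [mem_vanishingIdeal_iff]
      intro x hx
      have hx' := mem_zl.1 hx
      have hxY : x ∈ Y := by
        rw [← zl_vI hY.irr.1, mem_zl]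
        exact fun f hf => hx' f (Ideal.mem_sup_left hf)
      have hx0 : x = 0 := by
        by_contra h0
        obtain ⟨g, ρ, f, M, hg, hf, hM⟩ := sec_exists hY hxY h0
        exact hg (hx' g (Ideal.mem_sup_right (Ideal.subset_span ⟨ρ, f, M, hf, hM⟩)))
      rw [hx0]; simp
    obtain ⟨k, hk⟩ := hXr
    have := hJI hk
    change O.valuation (aeval y (X a ^ k)) < 1 at this
    rw [map_pow, aeval_X, hya, map_pow, Valuation.map_neg, map_one, one_pow] at this
    exact lt_irrefl _ this
  obtain ⟨g, ⟨ρ, f, M, hf, hM⟩, hg⟩ := hSg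
  have hid : aeval y g * (∑ a, h a * Z a) = ∑ a, h a * ∑ i, aeval y (M a i) * ∑ b, aeval y (pderiv b (f i)) * Z b := by
    have e1 : ∀ b, ∑ a, h a * aeval y ((if a = b then g else 0) - ∑ i, M a i * pderiv b (f i)) = 0 :=
      fun b => h3 _ (hM b) (-t)
    have e2 : ∑ b, Z b * ∑ a, h a * aeval y ((if a = b then g else 0) - ∑ i, M a i * pderiv b (f i)) = 0 := by
      exact Finset.sum_eq_zero fun b _ => by rw [e1, mul_zero]
    have e3 : ∑ b, Z b * ∑ a, h a * aeval y ((if a = b then g else 0) - ∑ i, M a i * pderiv b (f i)) =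
      aeval y g * (∑ a, h a * Z a) - ∑ a, h a * ∑ i, aeval y (M a i) * ∑ b, aeval y (pderiv b (f i)) * Z b := by
      simp only [map_sub, mul_sub, Finset.sum_sub_distrib]
      congr 1
      · rw [Finset.mul_sum]
        refine Finset.sum_congr rfl fun b _ => ?_
        rw [Finset.sum_eq_single b]
        · simp; ring
        · intro c _ hc; simp [hc]
        · simp
      · simp only [Finset.mul_sum, map_sum, map_mul]
        rw [Finset.sum_comm]
        refine Finset.sum_congr rfl fun c _ => ?_
        rw [Finset.sum_comm]
        refine Finset.sum_congr rfl fun i _ => Finset.sum_congr rfl fun b _ => ?_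
        ring
    rw [e3] at e2
    exact sub_eq_zero.1 e2
  have hv1 : O.valuation (aeval y g * (∑ a, h a * Z a)) < 1 := by
    rw [hid]
    apply Valuation.map_sum_lt _ one_ne_zero
    intro c _
    rw [map_mul, mul_comm]
    refine mul_lt_one_of_lt_of_le ?_ ((ValuationSubring.valuation_le_one_iff _ _).2 (hh c))
    apply Valuation.map_sum_lt _ one_ne_zero
    intro i _
    rw [map_mul, mul_comm]
    exact mul_lt_one_of_lt_of_le (hdf _ (hf i)) ((ValuationSubring.valuation_le_one_iff _ _).2 (aeval_memO O hO y hy _))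
  rw [map_mul, hg, one_mul] at hv1
  have hv2 := (ValuationSubring.valuation_le_one_iff O _).2 hhZ'
  rw [map_inv₀] at hv2
  have hv0 : 0 < O.valuation (∑ a, h a * Z a) := by
    rw [zero_lt_iff, Ne, map_eq_zero]; exact hhZ
  exact absurd ((one_lt_inv₀ hv0).2 hv1) (not_lt.2 hv2)


/-- the ideal of polynomials vanishing on all tuples of points of `Y`. -/
def IT {N : ℕ} (m : ℕ) (Y : Set (Fin N → ℂ)) : Ideal (MvPolynomial (Fin m × Fin N) ℂ) where
  carrier := {f | ∀ p : Fin m → Fin N → ℂ, (∀ i, p i ∈ Y) → evT p f = 0}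
  add_mem' := by
    intro f g hf hg p hp
    change evT p (f + g) = 0
    have h1 := hf p hp
    have h2 := hg p hp
    rw [evT] at *
    rw [map_add, h1, h2, add_zero]
  zero_mem' := by intro p _; simp [evT]
  smul_mem' := by
    intro c f hf p hp
    have h1 := hf p hp
    rw [evT] at *
    rw [smul_eq_mul, map_mul, h1, mul_zero]

lemma mem_IT {N m : ℕ} {Y : Set (Fin N → ℂ)} {f : MvPolynomial (Fin m × Fin N) ℂ} :
    f ∈ IT m Y ↔ ∀ p : Fin m → Fin N → ℂ, (∀ i, p i ∈ Y) → evT p f = 0 := Iff.rfl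

lemma IT_prime {N m : ℕ} {Y : Set (Fin N → ℂ)} (hY : IrrAlg Y) (h0 : Y.Nonempty) : (IT m Y).IsPrime := by
  obtain ⟨x, hx⟩ := h0
  constructor
  · intro h
    have : (1 : MvPolynomial (Fin m × Fin N) ℂ) ∈ IT m Y := by rw [h]; trivial
    have := mem_IT.1 this (fun _ => x) (fun _ => hx)
    simp [evT] at this
  · intro f g hfg
    by_contra hcon
    push Not at hcon
    obtain ⟨h1, h2⟩ := hcon
    rw [mem_IT] at h1 h2
    push Not at h1 h2
    obtain ⟨p, hp, h1⟩ := h1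
    obtain ⟨q, hq, h2⟩ := h2
    obtain ⟨z, hz, h3, h4⟩ := genT_two hY hp hq h1 h2
    have := mem_IT.1 hfg z hz
    rw [evT, map_mul] at this
    exact mul_ne_zero h3 h4 this

/-- linear implication over the generic point specializes -/
lemma lin_spec {N m : ℕ} {Y : Set (Fin N → ℂ)} {B K : Type} [CommRing B] [IsDomain B] [Field K] [Algebra B K] [IsFractionRing B K]
    (π₀ : MvPolynomial (Fin m × Fin N) ℂ →+* B) (hs : Function.Surjective π₀)
    (hk : ∀ f, π₀ f = 0 ↔ f ∈ IT m Y) {α β γ : Type} [Fintype α] [Fintype β] [Fintype γ]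
    [DecidableEq α] [DecidableEq β] [DecidableEq γ]
    (A : Matrix α β (MvPolynomial (Fin m × Fin N) ℂ)) (A' : Matrix γ β (MvPolynomial (Fin m × Fin N) ℂ))
    (H : ∀ c : β → K, (∀ i, ∑ j, algebraMap B K (π₀ (A i j)) * c j = 0) →
      ∀ i, ∑ j, algebraMap B K (π₀ (A' i j)) * c j = 0) :
    ∃ w, w ∉ IT m Y ∧ ∀ p : Fin m → Fin N → ℂ, (∀ i, p i ∈ Y) → evT p w ≠ 0 →
      ∀ c : β → ℂ, (∀ i, ∑ j, evT p (A i j) * c j = 0) → ∀ i, ∑ j, evT p (A' i j) * c j = 0 := by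
  let π : MvPolynomial (Fin m × Fin N) ℂ →+* K := (algebraMap B K).comp π₀
  have hπ : ∀ f, π f = 0 ↔ f ∈ IT m Y := by
    intro f
    rw [← hk]
    change algebraMap B K (π₀ f) = 0 ↔ _
    exact FaithfulSMul.algebraMap_eq_zero_iff B K
  let AK : Matrix α β K := A.map π
  let AK' : Matrix γ β K := A'.map π
  have hker : LinearMap.ker AK.mulVecLin ≤ LinearMap.ker AK'.mulVecLin := by
    intro c hc
    rw [LinearMap.mem_ker] at *
    ext i
    exact H c (fun i => congrFun hc i) i
  obtain ⟨Λ, hΛ⟩ : ∃ Λ : (α → K) →ₗ[K] (γ → K), Λ ∘ₗ AK.mulVecLin = AK'.mulVecLin := by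
    let f : LinearMap.range AK.mulVecLin →ₗ[K] (γ → K) :=
      (Submodule.liftQ _ AK'.mulVecLin hker) ∘ₗ (AK.mulVecLin.quotKerEquivRange.symm : _ →ₗ[K] _)
    obtain ⟨Λ, hΛ⟩ := f.exists_extend
    refine ⟨Λ, ?_⟩
    apply LinearMap.ext
    intro c
    have := LinearMap.congr_fun hΛ ⟨AK.mulVecLin c, LinearMap.mem_range_self _ c⟩
    change Λ (AK.mulVecLin c) = _ at this
    change Λ (AK.mulVecLin c) = _
    rw [this]
    have e : AK.mulVecLin.quotKerEquivRange.symm ⟨AK.mulVecLin c, LinearMap.mem_range_self _ c⟩ =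
        Submodule.Quotient.mk c := by
      rw [LinearEquiv.symm_apply_eq]
      rfl
    change (Submodule.liftQ _ AK'.mulVecLin hker) (AK.mulVecLin.quotKerEquivRange.symm _) = _
    rw [e]
    rfl
  let Lm : Matrix γ α K := LinearMap.toMatrix' Λ
  have hLm : Lm * AK = AK' := by
    have h1 : LinearMap.toMatrix' (Λ ∘ₗ AK.mulVecLin) = LinearMap.toMatrix' AK'.mulVecLin := by rw [hΛ]
    rw [LinearMap.toMatrix'_comp] at h1
    rw [← Matrix.toLin'_apply', ← Matrix.toLin'_apply', LinearMap.toMatrix'_toLin', LinearMap.toMatrix'_toLin'] at h1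
    exact h1
  obtain ⟨w, hw⟩ := IsLocalization.exist_integer_multiples_of_finite (nonZeroDivisors B)
    (fun ij : γ × α => Lm ij.1 ij.2)
  choose u hu using hw
  obtain ⟨w', hw'⟩ := hs (w : B)
  choose U hU using fun ij => hs (u ij)
  have hUw : ∀ i j, π (U (i, j)) = π w' * Lm i j := by
    intro i j
    change algebraMap B K (π₀ _) = algebraMap B K (π₀ _) * _
    rw [hU, hu (i, j), hw', Algebra.smul_def]
  have hmem : ∀ i j, w' * A' i j - ∑ k, U (i, k) * A k j ∈ IT m Y := by
    intro i j
    rw [← hπ, map_sub, map_mul, map_sum]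
    have : π (A' i j) = ∑ k, Lm i k * π (A k j) := by
      have := congrFun (congrFun hLm i) j
      rw [Matrix.mul_apply] at this
      exact this.symm
    rw [this, Finset.mul_sum, sub_eq_zero]
    refine Finset.sum_congr rfl fun k _ => ?_
    rw [map_mul, hUw]; ring
  refine ⟨w', ?_, ?_⟩
  · rw [← hk, hw']
    exact nonZeroDivisors.ne_zero w.2
  · intro p hp hwp c hc i
    have h1 : ∀ j, evT p w' * evT p (A' i j) = ∑ k, evT p (U (i, k)) * evT p (A k j) := by
      intro j
      have := mem_IT.1 (hmem i j) p hp
      rw [evT, map_sub, map_mul, map_sum, sub_eq_zero] at this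
      simp only [map_mul] at this
      exact this
    have h2 : evT p w' * ∑ j, evT p (A' i j) * c j = 0 := by
      rw [Finset.mul_sum]
      simp only [← mul_assoc, h1]
      simp only [Finset.sum_mul]
      rw [Finset.sum_comm]
      refine Finset.sum_eq_zero fun k _ => ?_
      simp only [mul_assoc]
      rw [← Finset.mul_sum, hc, mul_zero]
    exact (mul_eq_zero.1 h2).resolve_left hwp

lemma poly_spec {N m : ℕ} {Y : Set (Fin N → ℂ)} {K : Type} [Field K]
    (π : MvPolynomial (Fin m × Fin N) ℂ →+* K) (hk : ∀ f ∈ IT m Y, π f = 0)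
    (Φ : Polynomial (MvPolynomial (Fin m × Fin N) ℂ))
    (H : ∀ p : Fin m → Fin N → ℂ, (∀ i, p i ∈ Y) → ∀ l : ℂ, l ≠ 0 →
      Φ.eval₂ (eval (fun a => p a.1 a.2)) l = 0) (l : K) : Φ.eval₂ π l = 0 := by
  have hc : ∀ n, π (Φ.coeff n) = 0 := by
    intro n
    apply hk
    intro p hp
    have : Φ.map (eval (fun a : Fin m × Fin N => p a.1 a.2)) = 0 := by
      apply Polynomial.eq_zero_of_infinite_isRoot
      refine Set.Infinite.mono (s := {0}ᶜ) ?_ (Set.finite_singleton (0:ℂ)).infinite_compl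
      intro l hl
      change Polynomial.eval l _ = 0
      rw [Polynomial.eval_map]
      exact H p hp l hl
    have h2 := congrArg (fun q => Polynomial.coeff q n) this
    rw [Polynomial.coeff_map] at h2
    exact h2
  rw [Polynomial.eval₂_eq_sum, Polynomial.sum]
  exact Finset.sum_eq_zero fun n _ => by rw [hc, zero_mul]

lemma eval₂_aev {R K : Type} [CommRing R] [Algebra ℂ R] [CommRing K] [Algebra ℂ K] (π : R →ₐ[ℂ] K) {N : ℕ}
    (v : Fin N → R) (l : K) (f : MvPolynomial (Fin N) ℂ) :
    Polynomial.eval₂ (π : R →+* K) l (aeval (fun a => Polynomial.X * Polynomial.C (v a)) f) =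
      aeval (fun a => l * π (v a)) f := by
  induction f using MvPolynomial.induction_on with
  | C c => 
    rw [algHom_C, algHom_C, Polynomial.algebraMap_apply, Polynomial.eval₂_C]
    exact π.commutes c
  | add p q hp hq => rw [map_add, map_add, Polynomial.eval₂_add, hp, hq]
  | mul_X p j hp =>
    rw [map_mul, map_mul, Polynomial.eval₂_mul, hp, aeval_X, aeval_X, Polynomial.eval₂_mul,
      Polynomial.eval₂_X, Polynomial.eval₂_C]
    rfl

lemma pderiv_subst1 {N m : ℕ} (p : Fin m → Fin N → ℂ) (i : Fin m) (a : Fin N) (g : MvPolynomial (Fin m × Fin N) ℂ) :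
    eval (p i) (pderiv a (subst1 p i g)) = evT p (pderiv (i, a) g) := by
  rw [subst1, chain_rule, Finset.sum_eq_single (i, a)]
  · have := eval_subst1 p i (pderiv (i, a) g) (p i)
    rw [subst1, Function.update_eq_self] at this
    rw [if_pos rfl, pderiv_X_self, smul_eq_mul, mul_one]
    exact this
  · rintro ⟨j, b⟩ _ hb
    by_cases hj : j = i
    · subst hj
      have : b ≠ a := fun e => hb (by rw [e])
      simp [pderiv_X_of_ne this]
    · simp [hj]
  · simp


lemma field_core {N n j : ℕ} {Y : Set (Fin N → ℂ)} (hY : Setup N n Y) (hsec : secant j Y ≠ Set.univ)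
    (V : Fin (j+2) → Fin N → MvPolynomial (Fin (j+2) × Fin N) ℂ)
    (hV : ∀ p : Fin (j+2) → Fin N → ℂ, (∀ i, p i ∈ Y) → ∀ i, (fun a => evT p (V i a)) ∈ tanSpan Y (p i))
    (h1 : ∀ a, ∑ i : Fin (j+1), V i.castSucc a ∈ IT (j+2) Y)
    (h2 : ∀ a, V 0 a + V (Fin.last (j+1)) a ∈ IT (j+2) Y) :
    ∀ a, V 0 a ∈ IT (j+2) Y := by
  by_contra hcon
  push Not at hcon
  obtain ⟨a₀, ha₀⟩ := hcon
  obtain ⟨x₀, hx₀, hx₀0⟩ := hY.exists_ne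
  have hp := IT_prime (m := j+2) hY.irr ⟨x₀, hx₀⟩
  let I := IT (j+2) Y
  let B := MvPolynomial (Fin (j+2) × Fin N) ℂ ⧸ I
  let K := FractionRing B
  let π₀ : MvPolynomial (Fin (j+2) × Fin N) ℂ →ₐ[ℂ] B := Ideal.Quotient.mkₐ ℂ I
  let π : MvPolynomial (Fin (j+2) × Fin N) ℂ →ₐ[ℂ] K := (IsScalarTower.toAlgHom ℂ B K).comp π₀
  have hπ₀ : ∀ F, π₀ F = 0 ↔ F ∈ I := fun F => Ideal.Quotient.eq_zero_iff_mem
  have hπ₀s : Function.Surjective π₀ := Ideal.Quotient.mk_surjective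
  have hπ : ∀ F, π F = 0 ↔ F ∈ I := by
    intro F
    rw [← hπ₀]
    change algebraMap B K (π₀ F) = 0 ↔ _
    rw [FaithfulSMul.algebraMap_eq_zero_iff]
  have hcomm : ∀ {τ : Type} (φ : τ → MvPolynomial (Fin (j+2) × Fin N) ℂ) (f : MvPolynomial τ ℂ),
      π (aeval φ f) = aeval (fun b => π (φ b)) f := by
    intro τ φ f
    have : π.comp (aeval φ) = aeval (fun b => π (φ b)) := by
      apply MvPolynomial.algHom_ext
      intro i; simp
    exact AlgHom.congr_fun this f
  -- derivation
  let d : Derivation ℂ (MvPolynomial (Fin (j+2) × Fin N) ℂ) (MvPolynomial (Fin (j+2) × Fin N) ℂ) :=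
    mkDerivation ℂ (fun ia => V ia.1 ia.2)
  have hdX : ∀ i a, d (X (i, a)) = V i a := fun i a => mkDerivation_X _ _ _
  have hd : ∀ f, π₀ f = 0 → π₀ (d f) = 0 := by
    intro f hf
    rw [hπ₀] at hf ⊢
    have e : d f = ∑ i, ∑ a, pderiv (i, a) f * V i a := by
      have := chain_rule d X f
      rw [aeval_X_left_apply, Fintype.sum_prod_type] at this
      rw [this]
      simp only [hdX, aeval_X_left_apply, smul_eq_mul]
    rw [e]
    refine sum_mem fun i _ => ?_
    intro p hp
    have h3 : subst1 p i f ∈ vI Y := mem_vI.2 fun y hy => by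
      rw [eval_subst1]
      apply hf
      intro k
      by_cases hk : k = i
      · subst hk; simpa using hy
      · simpa [hk] using hp k
    have h4 := mem_tan.1 (hV p hp i) _ h3
    rw [dL_apply] at h4
    simp only [pderiv_subst1] at h4
    rw [evT, map_sum, ← h4]
    refine Finset.sum_congr rfl fun a _ => ?_
    rw [map_mul, mul_comm]
  let dB : Derivation ℂ B B := Derivation.liftOfSurjective hπ₀s hd
  have hdB : ∀ f, dB (π₀ f) = π₀ (d f) := fun f => Derivation.liftOfSurjective_apply hπ₀s hd f
  obtain ⟨D, hD⟩ := der_ext_frac (B := B) (K := K) ((Algebra.linearMap B K).compDer dB)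
  have hDπ : ∀ f, D (π f) = π (d f) := by
    intro f
    have := hD (π₀ f)
    change D (π f) = algebraMap B K (dB (π₀ f)) at this
    rw [hdB] at this
    exact this
  let P : Fin (j+2) → Fin N → K := fun i a => π (X (i, a))
  let U : Fin N → K := fun a => ∑ i : Fin (j+1), P i.castSucc a
  let Z : Fin N → K := fun a => P 0 a + P (Fin.last (j+1)) a
  have hDU : ∀ a, D (U a) = 0 := by
    intro a
    have : U a = π (∑ i : Fin (j+1), X (i.castSucc, a)) := by rw [map_sum]
    rw [this, hDπ, map_sum]
    simp only [hdX]
    exact (hπ _).2 (h1 a)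
  have hDZ : ∀ a, D (Z a) = 0 := by
    intro a
    have : Z a = π (X (0, a) + X (Fin.last (j+1), a)) := by rw [map_add]
    rw [this, hDπ, map_add, hdX, hdX]
    exact (hπ _).2 (h2 a)
  have hDP : D (P 0 a₀) ≠ 0 := by
    rw [hDπ, hdX, Ne, hπ]; exact ha₀
  obtain ⟨F, hF, q, hq, hqF⟩ := F_exists hY.cone j hsec
  let up : Fin N → MvPolynomial (Fin (j+2) × Fin N) ℂ := fun b => ∑ i : Fin (j+1), X (i.castSucc, b)
  have hup : ∀ (p : Fin (j+2) → Fin N → ℂ) (G : MvPolynomial (Fin N) ℂ),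
      evT p (aeval up G) = eval (∑ i : Fin (j+1), p i.castSucc) G := by
    intro p G
    rw [evT, eval_aev]
    congr 2
    ext a; simp [up]
  have hupU : ∀ G : MvPolynomial (Fin N) ℂ, π (aeval up G) = aeval U G := by
    intro G
    rw [hcomm]
    congr 2
    ext b
    simp only [up, map_sum]
    rfl
  let hp' : Fin N → MvPolynomial (Fin (j+2) × Fin N) ℂ := fun a => aeval up (pderiv a F)
  let h : Fin N → K := fun a => π (hp' a)
  have hDh : ∀ a, D (h a) = 0 := by
    intro a
    change D (π (aeval up (pderiv a F))) = 0
    rw [hupU, chain_rule]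
    simp [hDU]
  have hdL : ∀ (p : Fin (j+2) → Fin N → ℂ) (v : Fin N → MvPolynomial (Fin (j+2) × Fin N) ℂ),
      evT p (∑ a, hp' a * v a) = dL (∑ i : Fin (j+1), p i.castSucc) F (fun a => evT p (v a)) := by
    intro p v
    rw [dL_apply, evT, map_sum]
    refine Finset.sum_congr rfl fun a _ => ?_
    rw [map_mul, mul_comm]
    congr 1
    exact hup p _
  have hhZ : (∑ a, h a * Z a) ≠ 0 := by
    have e : (∑ a, h a * Z a) = π (∑ a, hp' a * (X (0, a) + X (Fin.last (j+1), a))) := by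
      simp only [map_sum, map_mul, map_add]
      rfl
    rw [e, Ne, hπ]
    intro hmem
    have : ∃ x ∈ Y, dL (∑ i, q i) F x ≠ 0 := by
      by_contra hcon
      push Not at hcon
      apply hqF
      rw [← LinearMap.ker_eq_top, eq_top_iff, ← hY.nd, Submodule.span_le]
      exact fun x hx => hcon x hx
    obtain ⟨x, hx, hxF⟩ := this
    let p : Fin (j+2) → Fin N → ℂ := Fin.snoc (α := fun _ => Fin N → ℂ) q x
    have hpc : ∀ i : Fin (j+1), p i.castSucc = q i := fun i => Fin.snoc_castSucc (α := fun _ => Fin N → ℂ) ..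
    have hpl : p (Fin.last (j+1)) = x := Fin.snoc_last (α := fun _ => Fin N → ℂ) ..
    have hpY : ∀ i, p i ∈ Y := by
      intro i
      refine Fin.lastCases ?_ (fun i => ?_) i
      · rw [hpl]; exact hx
      · rw [hpc]; exact hq i
    have h5 := mem_IT.1 hmem p hpY
    rw [hdL] at h5
    have h6 : (fun a => evT p (X (0, a) + X (Fin.last (j+1), a))) = q 0 + x := by
      ext a
      have h7 := hpc 0
      rw [Fin.castSucc_zero] at h7
      simp [evT, h7, hpl]
    simp only [hpc] at h5
    rw [h6, map_add, F_kill hF q hq 0 (tan_self hY.cone (hq 0)), zero_add] at h5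
    exact hxF h5
  obtain ⟨O, hO, hPO⟩ := der_val D (P 0 a₀) hDP
  have hev : ∀ (p : Fin (j+2) → Fin N → ℂ), ∀ (v : Fin N → MvPolynomial (Fin (j+2) × Fin N) ℂ) (l : ℂ) (f : MvPolynomial (Fin N) ℂ),
      Polynomial.eval₂ (eval (fun a : Fin (j+2) × Fin N => p a.1 a.2)) l
        (aeval (fun a => Polynomial.X * Polynomial.C (v a)) f) = eval (l • fun a => evT p (v a)) f := by
    intro p v l f
    have := eval₂_aev (aeval (fun a : Fin (j+2) × Fin N => p a.1 a.2) : MvPolynomial (Fin (j+2) × Fin N) ℂ →ₐ[ℂ] ℂ) v l f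
    rw [← coe_aeval_eq_eval, ← coe_aeval_eq_eval]
    exact this
  have hvan : ∀ i : Fin (j+2), ∀ f ∈ vI Y, ∀ l : K, aeval (fun a => l * P i a) f = 0 := by
    intro i f hf l
    rw [← eval₂_aev π]
    apply poly_spec (Y := Y) (π : _ →+* K) (fun f hf => (hπ f).2 hf)
    intro p hp l hl
    rw [hev]
    have : (fun a => evT p (X (i, a))) = p i := by ext a; simp [evT]
    rw [this]
    exact mem_vI.1 hf _ (hY.cone.2 _ _ (hp i))
  have hDc : ∀ c : ℂ, D (algebraMap ℂ K c) = 0 := fun c => D.map_algebraMap c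
  have hDs : D (∑ a, h a * Z a) = 0 := by
    rw [map_sum]
    refine Finset.sum_eq_zero fun a _ => ?_
    rw [Derivation.leibniz, hDh, hDZ, smul_zero, smul_zero, add_zero]
  refine val_core hY O (fun c => hO _ (hDc c)) (P 0) Z h (fun a => hO _ (hDZ a)) (fun a => hO _ (hDh a)) hhZ
    (hO _ ?_) ⟨a₀, hPO⟩ (hvan 0) ?_ ?_
  · rw [Derivation.leibniz_inv, hDs, smul_zero]
  · intro f hf l
    have := hvan (Fin.last (j+1)) f hf l
    have e : (fun a => l * (Z a - P 0 a)) = fun a => l * P (Fin.last (j+1)) a := by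
      ext a
      change l * (P 0 a + P (Fin.last (j+1)) a - P 0 a) = _
      ring
    rw [e]; exact this
  · intro s hs l
    let Φ : Polynomial (MvPolynomial (Fin (j+2) × Fin N) ℂ) :=
      ∑ a, Polynomial.C (hp' a) * aeval (fun a => Polynomial.X * Polynomial.C (X (0, a))) (s a)
    have h5 : Polynomial.eval₂ (π : _ →+* K) l Φ = ∑ a, h a * aeval (fun a => l * P 0 a) (s a) := by
      rw [Polynomial.eval₂_finsetSum]
      refine Finset.sum_congr rfl fun a _ => ?_
      rw [Polynomial.eval₂_mul, Polynomial.eval₂_C, eval₂_aev]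
      rfl
    rw [← h5]
    apply poly_spec (Y := Y) (π : _ →+* K) (fun f hf => (hπ f).2 hf)
    intro p hp l hl
    rw [Polynomial.eval₂_finsetSum]
    have h0 : (fun a => evT p (X (0, a))) = p 0 := by ext a; simp [evT]
    have h6 : ∀ a, Polynomial.eval₂ (eval (fun a : Fin (j+2) × Fin N => p a.1 a.2)) l
      (Polynomial.C (hp' a) * aeval (fun a => Polynomial.X * Polynomial.C (X (0, a))) (s a)) =
        eval (l • p 0) (s a) * eval (∑ i : Fin (j+1), p i.castSucc) (pderiv a F) := by
      intro a
      rw [Polynomial.eval₂_mul, Polynomial.eval₂_C, hev, h0, mul_comm]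
      congr 1
      exact hup p _
    simp only [h6]
    have h7 := F_kill hF (fun i => p i.castSucc) (fun i => hp _) 0
      (v := fun a => eval (l • p 0) (s a))
      (tan_smul hY.cone _ _ l hl (hs _ (hY.cone.2 _ _ (hp 0))))
    rw [dL_apply] at h7
    exact h7


lemma sum_help1 {R : Type} [CommRing R] {j N : ℕ} (e c : Fin (j+2) × Fin N → R) :
    ∑ x, (if x.1 = Fin.last (j+1) then 0 else e x) * c x =
      ∑ i : Fin (j+1), ∑ b, e (i.castSucc, b) * c (i.castSucc, b) := by
  rw [Fintype.sum_prod_type, Fin.sum_univ_castSucc]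
  have : ∀ i : Fin (j+1), i.castSucc ≠ Fin.last (j+1) := fun i => Fin.castSucc_ne_last i
  simp [this]

lemma sum_help3 {R : Type} [CommRing R] {j N : ℕ} (e c : Fin (j+2) × Fin N → R) :
    ∑ x, (if x.1 = 0 then e x else 0) * c x = ∑ b, e (0, b) * c (0, b) := by
  rw [Fintype.sum_prod_type, Finset.sum_eq_single 0]
  · simp
  · intro i _ hi; simp [hi]
  · simp

lemma sum_help2 {R : Type} [CommRing R] {j N : ℕ} (e c : Fin (j+2) × Fin N → R) :
    ∑ x, (if x.1 = 0 ∨ x.1 = Fin.last (j+1) then e x else 0) * c x =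
      ∑ b, e (0, b) * c (0, b) + ∑ b, e (Fin.last (j+1), b) * c (Fin.last (j+1), b) := by
  have h0 : Fin.last (j+1) ≠ 0 := Fin.last_pos.ne'
  rw [Fintype.sum_prod_type, ← Finset.sum_subset (Finset.subset_univ {0, Fin.last (j+1)})]
  · rw [Finset.sum_pair h0.symm]; simp
  · intro i _ hi
    simp only [Finset.mem_insert, Finset.mem_singleton] at hi
    simp [hi]

lemma triple {N n j : ℕ} {Y : Set (Fin N → ℂ)} (hY : Setup N n Y) (hsec : secant j Y ≠ Set.univ) :
    GenP (j+2) Y (fun p => tanSpan Y (p 0) ⊓ tanSpan Y (p (Fin.last (j+1))) ⊓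
      (⨆ i : Fin j, tanSpan Y (p i.succ.castSucc)) = ⊥) := by
  obtain ⟨x₀, hx₀, hx₀0⟩ := hY.exists_ne
  obtain ⟨g, ρ, f, M, hg, hf, hM⟩ := sec_exists hY hx₀ hx₀0
  let s : Fin N → Fin N → MvPolynomial (Fin N) ℂ :=
    fun b a => (if a = b then g else 0) - ∑ i, M a i * pderiv b (f i)
  have hs : ∀ b, TanSec Y (s b) := hM
  have hsv : ∀ x v, v ∈ tanSpan Y x → ∀ a, ∑ b, eval x (s b a) * v b = eval x g * v a := by
    intro x v hv a
    have e1 : ∀ i, ∑ b, eval x (M a i) * eval x (pderiv b (f i)) * v b = 0 := by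
      intro i
      have := mem_tan.1 hv _ (hf i)
      rw [dL_apply] at this
      rw [← mul_zero (eval x (M a i)), ← this, Finset.mul_sum]
      exact Finset.sum_congr rfl fun b _ => by ring
    simp only [s, map_sub, map_sum, map_mul, sub_mul, Finset.sum_sub_distrib, Finset.sum_mul]
    rw [Finset.sum_comm (s := Finset.univ) (t := Finset.univ)
      (f := fun b i => eval x (M a i) * eval x (pderiv b (f i)) * v b)]
    simp only [e1, Finset.sum_const_zero, sub_zero]
    rw [Finset.sum_eq_single a]
    · simp
    · intro b _ hb; simp [hb.symm]
    · simp
  have hp := IT_prime (m := j+2) hY.irr ⟨x₀, hx₀⟩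
  let I := IT (j+2) Y
  let B := MvPolynomial (Fin (j+2) × Fin N) ℂ ⧸ I
  let K := FractionRing B
  let π₀ : MvPolynomial (Fin (j+2) × Fin N) ℂ →+* B := Ideal.Quotient.mk I
  have hπ₀ : ∀ F, π₀ F = 0 ↔ F ∈ I := fun F => Ideal.Quotient.eq_zero_iff_mem
  have hπ₀s : Function.Surjective π₀ := Ideal.Quotient.mk_surjective
  let π : MvPolynomial (Fin (j+2) × Fin N) ℂ →+* K := (algebraMap B K).comp π₀
  have hπ : ∀ F, π F = 0 ↔ F ∈ I := by
    intro F
    rw [← hπ₀]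
    change algebraMap B K (π₀ F) = 0 ↔ _
    rw [FaithfulSMul.algebraMap_eq_zero_iff]
  let E : Fin N → Fin (j+2) × Fin N → MvPolynomial (Fin (j+2) × Fin N) ℂ :=
    fun a x => rename (fun a => (x.1, a)) (s x.2 a)
  have hE : ∀ (p : Fin (j+2) → Fin N → ℂ) a i b, evT p (E a (i, b)) = eval (p i) (s b a) := by
    intro p a i b
    rw [evT, eval_rename]; rfl
  let A : Matrix (Fin N ⊕ Fin N) (Fin (j+2) × Fin N) (MvPolynomial (Fin (j+2) × Fin N) ℂ) :=
    Matrix.of fun r x => Sum.elim (fun a => if x.1 = Fin.last (j+1) then 0 else E a x)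
      (fun a => if x.1 = 0 ∨ x.1 = Fin.last (j+1) then E a x else 0) r
  let A' : Matrix (Fin N) (Fin (j+2) × Fin N) (MvPolynomial (Fin (j+2) × Fin N) ℂ) :=
    Matrix.of fun a x => if x.1 = 0 then E a x else 0
  have hA1 : ∀ {R : Type} [CommRing R] (θ : MvPolynomial (Fin (j+2) × Fin N) ℂ →+* R) (c : Fin (j+2) × Fin N → R) a,
      ∑ x, θ (A (Sum.inl a) x) * c x = ∑ i : Fin (j+1), ∑ b, θ (E a (i.castSucc, b)) * c (i.castSucc, b) := by
    intro R _ θ c a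
    rw [← sum_help1 (fun x => θ (E a x)) c]
    refine Finset.sum_congr rfl fun x _ => ?_
    simp only [A, Matrix.of_apply, Sum.elim_inl, apply_ite θ, map_zero]
  have hA2 : ∀ {R : Type} [CommRing R] (θ : MvPolynomial (Fin (j+2) × Fin N) ℂ →+* R) (c : Fin (j+2) × Fin N → R) a,
      ∑ x, θ (A (Sum.inr a) x) * c x = ∑ b, θ (E a (0, b)) * c (0, b) +
        ∑ b, θ (E a (Fin.last (j+1), b)) * c (Fin.last (j+1), b) := by
    intro R _ θ c a
    rw [← sum_help2 (fun x => θ (E a x)) c]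
    refine Finset.sum_congr rfl fun x _ => ?_
    simp only [A, Matrix.of_apply, Sum.elim_inr, apply_ite θ, map_zero]
  have hA3 : ∀ {R : Type} [CommRing R] (θ : MvPolynomial (Fin (j+2) × Fin N) ℂ →+* R) (c : Fin (j+2) × Fin N → R) a,
      ∑ x, θ (A' a x) * c x = ∑ b, θ (E a (0, b)) * c (0, b) := by
    intro R _ θ c a
    rw [← sum_help3 (fun x => θ (E a x)) c]
    refine Finset.sum_congr rfl fun x _ => ?_
    simp only [A', Matrix.of_apply, apply_ite θ, map_zero]
  have H : ∀ c : Fin (j+2) × Fin N → K, (∀ i, ∑ j, π (A i j) * c j = 0) → ∀ i, ∑ j, π (A' i j) * c j = 0 := by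
    intro c hc
    obtain ⟨w, hw⟩ := IsLocalization.exist_integer_multiples_of_finite (nonZeroDivisors B) c
    choose u hu using hw
    obtain ⟨w', hw'⟩ := hπ₀s (w : B)
    choose U hU using fun ij => hπ₀s (u ij)
    have hUw : ∀ x, π (U x) = π w' * c x := by
      intro x
      change algebraMap B K (π₀ _) = algebraMap B K (π₀ _) * _
      rw [hU, hu x, hw', Algebra.smul_def]
    have hw0 : π w' ≠ 0 := by
      rw [Ne, hπ, ← hπ₀, hw']
      exact nonZeroDivisors.ne_zero w.2
    let V : Fin (j+2) → Fin N → MvPolynomial (Fin (j+2) × Fin N) ℂ := fun i a => ∑ b, E a (i, b) * U (i, b)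
    have hV : ∀ i a, π (V i a) = π w' * ∑ b, π (E a (i, b)) * c (i, b) := by
      intro i a
      rw [map_sum, Finset.mul_sum]
      exact Finset.sum_congr rfl fun b _ => by rw [map_mul, hUw]; ring
    have key := field_core hY hsec V (by
      intro p hp i
      have : (fun a => evT p (V i a)) = ∑ b, evT p (U (i, b)) • (fun a => eval (p i) (s b a)) := by
        ext a
        rw [evT, map_sum, Finset.sum_apply]
        refine Finset.sum_congr rfl fun b _ => ?_
        rw [map_mul, Pi.smul_apply, smul_eq_mul, mul_comm]
        congr 1
        exact hE p a i b
      rw [this]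
      exact sum_mem fun b _ => Submodule.smul_mem _ _ (hs b _ (hp i))) (by
      intro a
      have h1 := hc (Sum.inl a)
      rw [hA1] at h1
      change _ ∈ I
      rw [← hπ, map_sum]
      simp only [hV]
      rw [← Finset.mul_sum, h1, mul_zero]) (by
      intro a
      have h1 := hc (Sum.inr a)
      rw [hA2] at h1
      change _ ∈ I
      rw [← hπ, map_add, hV, hV, ← mul_add, h1, mul_zero])
    intro a
    rw [hA3]
    have h1 := (hπ _).2 (key a)
    rw [hV] at h1
    exact (mul_eq_zero.1 h1).resolve_left hw0
  obtain ⟨w, hw, hwp⟩ := lin_spec (B := B) (K := K) π₀ hπ₀s hπ₀ A A' H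
  let G : MvPolynomial (Fin (j+2) × Fin N) ℂ := ∏ i, rename (fun a => (i, a)) g
  have hG : ∀ p, evT p G = ∏ i, eval (p i) g := by
    intro p
    rw [evT, map_prod]
    exact Finset.prod_congr rfl fun i _ => by rw [eval_rename]; rfl
  rw [mem_IT] at hw
  push Not at hw
  obtain ⟨p₁, hp₁, hw₁⟩ := hw
  obtain ⟨p₂, hp₂, h3, h4⟩ := genT_two hY.irr (g₁ := w) (g₂ := G) (p₁ := p₁) (p₂ := fun _ => x₀) hp₁ (fun _ => hx₀) hw₁
    (by rw [hG]; exact Finset.prod_ne_zero_iff.2 fun i _ => hg)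
  refine ⟨w * G, ⟨p₂, hp₂, by rw [evT, map_mul]; exact mul_ne_zero h3 h4⟩, ?_⟩
  intro p hp hwG
  rw [evT, map_mul] at hwG
  have hgp : ∀ i, eval (p i) g ≠ 0 := by
    have := right_ne_zero_of_mul hwG
    change evT p G ≠ 0 at this
    rw [hG, Finset.prod_ne_zero_iff] at this
    exact fun i => this i (Finset.mem_univ i)
  have hsp := hwp p (fun i => (hp i).1) (left_ne_zero_of_mul hwG)
  rw [eq_bot_iff]
  rintro v ⟨⟨hv0, hvq⟩, hvL⟩
  obtain ⟨μ, hμ, hμv⟩ := (Submodule.mem_iSup_iff_exists_finsupp _ _).1 hvL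
  rw [Finsupp.sum_fintype _ _ (fun _ => rfl)] at hμv
  let W : Fin (j+2) → Fin N → ℂ := Fin.snoc (α := fun _ => Fin N → ℂ)
    (Fin.cons (α := fun _ => Fin N → ℂ) v (fun i => - μ i)) (- v)
  have hWl : W (Fin.last (j+1)) = -v := Fin.snoc_last (α := fun _ => Fin N → ℂ) ..
  have hW0 : W (Fin.castSucc 0) = v := (Fin.snoc_castSucc (α := fun _ => Fin N → ℂ) ..).trans
    (Fin.cons_zero (α := fun _ => Fin N → ℂ) ..)
  have hWs : ∀ i : Fin j, W (Fin.castSucc i.succ) = - μ i := fun i =>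
    (Fin.snoc_castSucc (α := fun _ => Fin N → ℂ) ..).trans (Fin.cons_succ (α := fun _ => Fin N → ℂ) ..)
  have hWt : ∀ i, W i ∈ tanSpan Y (p i) := by
    intro i
    refine Fin.lastCases ?_ (fun i => ?_) i
    · rw [hWl]; exact Submodule.neg_mem _ hvq
    · refine Fin.cases ?_ (fun i => ?_) i
      · rw [hW0]; exact hv0
      · rw [hWs]; exact Submodule.neg_mem _ (hμ i)
  let c : Fin (j+2) × Fin N → ℂ := fun x => (eval (p x.1) g)⁻¹ * W x.1 x.2
  have hc : ∀ i a, ∑ b, evT p (E a (i, b)) * c (i, b) = W i a := by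
    intro i a
    have e : ∀ b, evT p (E a (i, b)) * c (i, b) = (eval (p i) g)⁻¹ * (eval (p i) (s b a) * W i b) := by
      intro b
      rw [hE]
      change _ * ((eval (p i) g)⁻¹ * W i b) = _
      ring
    simp only [e]
    rw [← Finset.mul_sum, hsv _ _ (hWt i), ← mul_assoc, inv_mul_cancel₀ (hgp i), one_mul]
  have hfin := hsp c (by
    rintro (a | a)
    · rw [hA1]
      refine (Finset.sum_congr rfl fun i _ => hc i.castSucc a).trans ?_
      rw [Fin.sum_univ_succ, hW0, ← hμv]
      simp only [hWs, Finset.sum_apply, Pi.neg_apply, Finset.sum_neg_distrib]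
      ring
    · rw [hA2]
      refine (congrArg₂ (· + ·) (hc 0 a) (hc _ a)).trans ?_
      have : W 0 = v := hW0
      rw [this, hWl]
      simp)
  rw [Submodule.mem_bot]
  ext a
  have h5 := hfin a
  rw [hA3] at h5
  have h6 := (hc 0 a).symm.trans h5
  have : W 0 = v := hW0
  rw [this] at h6
  exact h6


lemma iSup_fin_succ {N j : ℕ} (T : Fin (j+1) → Submodule ℂ (Fin N → ℂ)) :
    ⨆ i, T i = T 0 ⊔ ⨆ i : Fin j, T i.succ := by
  apply le_antisymm
  · refine iSup_le fun i => ?_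
    refine Fin.cases le_sup_left (fun i => ?_) i
    exact le_sup_of_le_right (le_iSup (fun i : Fin j => T i.succ) i)
  · exact sup_le (le_iSup T 0) (iSup_le fun i => le_iSup T i.succ)

lemma inf_gen {N n : ℕ} {Y : Set (Fin N → ℂ)} (hY : Setup N n Y) {d d' j : ℕ}
    (h1 : GenP j Y (fun p => Module.finrank ℂ (⨆ i, tanSpan Y (p i) : Submodule ℂ (Fin N → ℂ)) = d))
    (h2 : GenP (j+1) Y (fun p => Module.finrank ℂ (⨆ i, tanSpan Y (p i) : Submodule ℂ (Fin N → ℂ)) = d')) :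
    GenP (j+1) Y (fun p => Module.finrank ℂ (tanSpan Y (p 0) ⊓ ⨆ i : Fin j, tanSpan Y (p i.succ) : Submodule ℂ (Fin N → ℂ)) = n + 1 + d - d') := by
  refine ((h1.pull hY Fin.succ (Fin.succ_injective j)).and hY.irr h2).mono fun p hp h => ?_
  obtain ⟨e1, e2⟩ := h
  rw [iSup_fin_succ (fun i => tanSpan Y (p i))] at e2
  have h3 := Submodule.finrank_sup_add_finrank_inf_eq (tanSpan Y (p 0)) (⨆ i : Fin j, tanSpan Y (p i.succ))
  rw [e1, e2, hY.sm _ (hp 0).1 (hp 0).2] at h3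
  omega

theorem subadd_aux {N n k₀ : ℕ} (hk₀ : 1 ≤ k₀) {Y : Set (Fin N → ℂ)} (hY : Setup N n Y)
    (hmin : ∀ j < k₀, secant j Y ≠ Set.univ) :
    ∃ ψ : ℕ → ℕ,
      (∀ j, 1 ≤ j → j ≤ k₀ →
        Generically (j+1) Y fun p => pdim (PsiLocus Y p) = nn (ψ j)) ∧
      (∀ j j', 1 ≤ j → j ≤ j' → j' ≤ k₀ → ψ j ≤ ψ j') ∧
      ψ k₀ ≤ n ∧
      (∀ j, 2 ≤ j → j ≤ k₀ → ψ (j-1) + ψ 1 ≤ ψ j) ∧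
      (∀ j, 1 ≤ j → j ≤ k₀ → j * ψ 1 ≤ ψ j) := by
  choose d hd1 hd2 using fun m => dd_exists hY m
  let ψ : ℕ → ℕ := fun j => n + 1 + d j - d (j+1)
  have hinf : ∀ j, GenP (j+1) Y (fun p => Module.finrank ℂ
      (tanSpan Y (p 0) ⊓ ⨆ i : Fin j, tanSpan Y (p i.succ) : Submodule ℂ (Fin N → ℂ)) = ψ j) :=
    fun j => inf_gen hY (hd2 j) (hd2 (j+1))
  have hadd : ∀ j, 1 ≤ j → j + 1 ≤ k₀ → ψ j + ψ 1 ≤ ψ (j+1) := by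
    intro j hj hjk
    have g1 := hinf (j+1)
    have g2 := (hinf j).pull hY (m' := j+2) Fin.castSucc (Fin.castSucc_injective _)
    have g3 := (hinf 1).pull hY (m' := j+2) (fun i : Fin 2 => if i = 0 then 0 else Fin.last (j+1)) (by
      have h0 : (0 : Fin (j+2)) ≠ Fin.last (j+1) := Fin.last_pos.ne
      intro a b hab
      by_cases ha : a = 0 <;> by_cases hb : b = 0
      · rw [ha, hb]
      · simp [ha, hb] at hab
      · simp [ha, hb] at hab
      · omega)
    have g4 := triple hY (hmin j (by omega))
    obtain ⟨p, hp, ⟨⟨e1, e2⟩, e3⟩, e4⟩ := (((g1.and hY.irr g2).and hY.irr g3).and hY.irr g4).exists hY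
    have e3' : Module.finrank ℂ (tanSpan Y (p 0) ⊓ tanSpan Y (p (Fin.last (j+1))) : Submodule ℂ (Fin N → ℂ)) = ψ 1 := by
      rw [← e3]
      have : (⨆ i : Fin 1, tanSpan Y (p (if i.succ = 0 then 0 else Fin.last (j+1)))) =
          tanSpan Y (p (Fin.last (j+1))) := by
        have : ∀ i : Fin 1, i.succ ≠ 0 := fun i => Fin.succ_ne_zero i
        simp only [this, if_false]
        exact iSup_const
      rw [this]
      rfl
    have e2' : Module.finrank ℂ (tanSpan Y (p 0) ⊓ ⨆ i : Fin j, tanSpan Y (p i.succ.castSucc) : Submodule ℂ (Fin N → ℂ)) = ψ j := e2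
    rw [← e1, ← e2', ← e3']
    have h3 := Submodule.finrank_sup_add_finrank_inf_eq
      (tanSpan Y (p 0) ⊓ ⨆ i : Fin j, tanSpan Y (p i.succ.castSucc))
      (tanSpan Y (p 0) ⊓ tanSpan Y (p (Fin.last (j+1))))
    have h4 : (tanSpan Y (p 0) ⊓ ⨆ i : Fin j, tanSpan Y (p i.succ.castSucc)) ⊓
      (tanSpan Y (p 0) ⊓ tanSpan Y (p (Fin.last (j+1)))) = ⊥ := by
      rw [eq_bot_iff, ← e4]
      exact le_inf inf_le_right (inf_le_left.trans inf_le_right)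
    rw [h4, finrank_bot, add_zero] at h3
    rw [← h3]
    apply Submodule.finrank_mono
    refine sup_le (inf_le_inf_left _ (iSup_le fun i => ?_)) (inf_le_inf_left _ ?_)
    · rw [← Fin.succ_castSucc]
      exact le_iSup (fun i : Fin (j+1) => tanSpan Y (p i.succ)) i.castSucc
    · rw [← Fin.succ_last]
      exact le_iSup (fun i : Fin (j+1) => tanSpan Y (p i.succ)) (Fin.last j)
  have hmono : ∀ j j', 1 ≤ j → j ≤ j' → j' ≤ k₀ → ψ j ≤ ψ j' := by
    intro j j' hj hjj'
    induction j', hjj' using Nat.le_induction with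
    | base => intro _; exact le_rfl
    | succ m hm ih =>
      intro hk
      have h1 := ih (by omega)
      have h2 := hadd m (by omega) hk
      omega
  have hpsi : ∀ i, i + 1 ≤ k₀ → GenP (i+2) Y (fun p => pdim (PsiLocus Y p) = nn (ψ (i+1)) ∧ ψ (i+1) ≤ n) := by
    intro i hi
    obtain ⟨F, hF, q, hq, hqF⟩ := F_exists hY.cone i (hmin i (by omega))
    refine (((gen_h hY hq hqF).and hY.irr (hinf (i+1))).and hY.irr (hd2 (i+2))).mono fun p hp h => ?_
    obtain ⟨⟨e1, e2⟩, e3⟩ := h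
    have hk : ∀ k : Fin (i+1), ∀ v ∈ tanSpan Y (p k.succ), dL (∑ k : Fin (i+1), p k.succ) F v = 0 :=
      fun k v hv => F_kill hF (fun k => p k.succ) (fun k => (hp _).1) k hv
    constructor
    · rw [← e2]
      exact psi_pt hY p hp (fun q hq => by rw [e3]; exact hd1 _ q hq) _ hk e1
    · rw [← e2, ← Nat.lt_succ_iff]
      have hsm := hY.sm _ (hp 0).1 (hp 0).2
      rw [Nat.succ_eq_add_one, ← hsm]
      apply Submodule.finrank_lt_finrank_of_lt
      refine lt_of_le_of_ne inf_le_left fun heq => ?_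
      have hmem : p 0 ∈ tanSpan Y (p 0) := tan_self hY.cone (hp 0).1
      rw [← heq] at hmem
      have hle : (⨆ k : Fin (i+1), tanSpan Y (p k.succ)) ≤ LinearMap.ker (dL (∑ k : Fin (i+1), p k.succ) F) :=
        iSup_le fun k v hv => hk k v hv
      exact e1 (hle hmem.2)
  refine ⟨ψ, ?_, hmono, ?_, ?_, ?_⟩
  · intro j hj hjk
    obtain ⟨i, rfl⟩ : ∃ i, j = i + 1 := ⟨j - 1, by omega⟩
    exact ((hpsi i hjk).mono fun p _ h => h.1).generically
  · obtain ⟨i, hi⟩ : ∃ i, k₀ = i + 1 := ⟨k₀ - 1, by omega⟩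
    obtain ⟨p, _, h⟩ := (hpsi i hi.ge).exists hY
    rw [hi]; exact h.2
  · intro j hj hjk
    obtain ⟨i, rfl⟩ : ∃ i, j = i + 1 := ⟨j - 1, by omega⟩
    exact hadd i (by omega) hjk
  · intro j hj
    induction j, hj using Nat.le_induction with
    | base => intro _; rw [one_mul]
    | succ m hm ih =>
      intro hk
      have h1 := ih (by omega)
      have h2 := hadd m hm hk
      rw [add_mul, one_mul]
      omega

lemma setup_of {N n : ℕ} {Y : Set (Fin N → ℂ)} (hX : IrrAlg Y) (hc : IsCone Y) (hne : Y ≠ {0}) (hnd : Nondeg Y)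
    (hdim : pdim Y = nn n) (hsm : ∀ x ∈ Y, x ≠ 0 → IsSmoothAt Y n x) : Setup N n Y := by
  refine ⟨hX, hc, hne, hnd, hsm, ?_⟩
  by_contra hcon
  push Not at hcon
  have hpos := dimA_pos hX hc hne
  obtain ⟨m, rfl⟩ : ∃ m, n = m + 1 := ⟨n - 1, by omega⟩
  have h1 := pdim_le Y m (fun T hT _ _ hTY => by
    have := dimA_mono hT hX hTY
    omega)
  rw [hdim] at h1
  simp only [nn] at h1
  norm_cast at h1
  omega

end HelperPart

/-- Palatini–Zak subadditivity: for a smooth irreducible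
non-degenerate `X` with `k₀ = min {k : S^k(X) = ℙ^r}`, the projection defects
satisfy `ψ_1 ≤ ψ_2 ≤ ⋯ ≤ ψ_{k₀} ≤ n`, `ψ_k ≥ ψ_{k-1} + ψ_1` and `ψ_k ≥ k ψ_1`. -/
theorem subadditivity (r n k₀ : ℕ) (hk₀ : 1 ≤ k₀) (X : Set (Fin (r+1) → ℂ))
    (hX : IrrAlg X) (hc : IsCone X) (hne : X ≠ {0}) (hnd : Nondeg X)
    (hdim : pdim X = nn n)
    (hsm : ∀ x ∈ X, x ≠ 0 → IsSmoothAt X n x)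
    (hfill : secant k₀ X = Set.univ) (hmin : ∀ j < k₀, secant j X ≠ Set.univ) :
    ∃ ψ : ℕ → ℕ,
      (∀ j, 1 ≤ j → j ≤ k₀ →
        Generically (j+1) X fun p => pdim (PsiLocus X p) = nn (ψ j)) ∧
      (∀ j j', 1 ≤ j → j ≤ j' → j' ≤ k₀ → ψ j ≤ ψ j') ∧
      ψ k₀ ≤ n ∧
      (∀ j, 2 ≤ j → j ≤ k₀ → ψ (j-1) + ψ 1 ≤ ψ j) ∧
      (∀ j, 1 ≤ j → j ≤ k₀ → j * ψ 1 ≤ ψ j) := by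
  exact subadd_aux hk₀ (setup_of hX hc hne hnd hdim hsm) hmin
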